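/- Sharp norm estimate for coherent state transforms (Corollary 3.3): Let k > 1/2 and q ≥ 2 be real numbers with kq > 2, and set p = q + 1/k. Let f(ζ) = (1−|ζ|²)^k Φ(ζ) where Φ is holomorphic on D and ∫_D |f|² dν_k < ∞. Then ∫_D |f|^q dν_k ≥ ((2k−1)/(kq−1)) · ((kp−1)/(2k−1))^{q/p} · (∫_D |f|^p dν_k)^{q/p}. -/

import Mathlib

open MeasureTheory Metric

/-- The measure `ν_k` on the unit disc `D ⊆ ℂ`, with density
`((2k−1)/π)(1−|ζ|²)^{−2}` with respect to Lebesgue measure. -/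
noncomputable def nuMeasure (k : ℝ) : Measure ℂ :=
  (volume.restrict (ball (0 : ℂ) 1)).withDensity
    (fun ζ => ENNReal.ofReal ((2 * k - 1) / Real.pi * ((1 - ‖ζ‖ ^ 2) ^ 2)⁻¹))

/-- The Wirtinger derivative `∂/∂(conj z)`. -/
noncomputable def dbar (F : ℂ → ℂ) (z : ℂ) : ℂ :=
  (fderiv ℝ F z 1 + Complex.I * fderiv ℝ F z Complex.I) / 2

lemma dbar_continuous {F : ℂ → ℂ} (hF : ContDiff ℝ 1 F) : Continuous (dbar F) := by
  unfold dbar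
  have h := hF.continuous_fderiv (by norm_num)
  fun_prop

lemma dbar_support {F : ℂ → ℂ} {z : ℂ} (hz : z ∉ tsupport F) : dbar F z = 0 := by
  have : fderiv ℝ F z = 0 := by
    by_contra h
    exact hz (support_fderiv_subset ℝ h)
  simp [dbar, this]

lemma dbar_compact {F : ℂ → ℂ} (hc : HasCompactSupport F) : HasCompactSupport (dbar F) :=
  HasCompactSupport.intro hc (fun _ hz => dbar_support hz)

lemma integral_fderiv_zero {F : ℂ → ℂ} (hF : ContDiff ℝ 1 F) (hc : HasCompactSupport F) (v : ℂ) :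
    ∫ z, fderiv ℝ F z v = 0 := by
  have h := hF.continuous_fderiv (by norm_num)
  have hd : Differentiable ℝ F := hF.differentiable (by norm_num)
  have key := integral_mul_fderiv_eq_neg_fderiv_mul_of_integrable (μ := (volume : Measure ℂ))
    (f := fun _ : ℂ => (1 : ℂ)) (g := F) (v := v) (by simp)
    (by
      simp only [one_mul]
      apply Continuous.integrable_of_hasCompactSupport (by fun_prop)
      exact (hc.fderiv_apply ℝ v))
    (by
      simp only [one_mul]
      exact hF.continuous.integrable_of_hasCompactSupport hc)
    (fun _ _ => by fun_prop) (fun x _ => hd x)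
  simpa using key

lemma integral_dbar {F : ℂ → ℂ} (hF : ContDiff ℝ 1 F) (hc : HasCompactSupport F) :
    ∫ z, dbar F z = 0 := by
  have h := hF.continuous_fderiv (by norm_num)
  have i1 : Integrable (fun z => fderiv ℝ F z 1) :=
    Continuous.integrable_of_hasCompactSupport (by fun_prop) (hc.fderiv_apply ℝ _)
  have i2 : Integrable (fun z => fderiv ℝ F z Complex.I) :=
    Continuous.integrable_of_hasCompactSupport (by fun_prop) (hc.fderiv_apply ℝ _)
  unfold dbar
  rw [integral_div, integral_add i1 (i2.const_mul _), integral_const_mul,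
    integral_fderiv_zero hF hc, integral_fderiv_zero hF hc]
  simp

/-- A continuous function vanishing for large radius is integrable in polar coordinates. -/
lemma polar_integrable {T : ℝ × ℝ → ℂ} (hT : Continuous T) {R : ℝ}
    (hR : ∀ r θ, R < r → T (r, θ) = 0) :
    IntegrableOn T (Set.Ioi (0:ℝ) ×ˢ Set.Ioo (-Real.pi) Real.pi) := by
  have h1 : IntegrableOn T (Set.Icc (0:ℝ) R ×ˢ Set.Icc (-Real.pi) Real.pi) :=
    hT.continuousOn.integrableOn_compact (isCompact_Icc.prod isCompact_Icc)
  refine IntegrableOn.of_forall_sdiff_eq_zero h1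
    (measurableSet_Ioi.prod measurableSet_Ioo) ?_
  rintro ⟨r, θ⟩ ⟨⟨h1, h2⟩, h3⟩
  apply hR
  by_contra h4
  exact h3 ⟨⟨le_of_lt h1, not_lt.1 h4⟩, ⟨h2.1.le, h2.2.le⟩⟩

/-- Cauchy-Pompeiu formula for compactly supported functions. -/
lemma pompeiu {g : ℂ → ℂ} (hg : ContDiff ℝ 1 g) (hc : HasCompactSupport g) (z : ℂ) :
    ∫ ζ, dbar g ζ / (ζ - z) = -(Real.pi : ℂ) * g z := by
  have hD := hg.continuous_fderiv (by norm_num)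
  have hd : Differentiable ℝ g := hg.differentiable (by norm_num)
  obtain ⟨R, hR⟩ : ∃ R, ∀ w : ℂ, R < ‖w‖ → z + w ∉ tsupport g := by
    obtain ⟨R, hR⟩ := hc.isBounded.subset_closedBall z
    refine ⟨R, fun w hw h => ?_⟩
    have := hR h
    simp at this
    linarith
  let e : ℝ → ℂ := fun θ => (Real.cos θ : ℂ) + Real.sin θ * Complex.I
  have he : Continuous e := by fun_prop
  have hen : ∀ θ, ‖e θ‖ = 1 := by
    intro θ
    have : e θ = Complex.exp (θ * Complex.I) := by
      simp [e, Complex.exp_mul_I]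
    rw [this, Complex.norm_exp_ofReal_mul_I]
  let T1 : ℝ × ℝ → ℂ := fun p => fderiv ℝ g (z + p.1 * e p.2) (e p.2)
  let T2 : ℝ × ℝ → ℂ := fun p => fderiv ℝ g (z + p.1 * e p.2) (Complex.I * e p.2)
  have cT1 : Continuous T1 := by fun_prop
  have cT2 : Continuous T2 := by fun_prop
  have hz0 : ∀ r θ, R < r → fderiv ℝ g (z + r * e θ) = 0 := by
    intro r θ hr
    by_contra h
    refine hR (r * e θ) ?_ (support_fderiv_subset ℝ h)
    simp only [norm_mul, hen, Complex.norm_real, mul_one, Real.norm_eq_abs]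
    exact hr.trans_le (le_abs_self r)
  have iT1 := polar_integrable cT1 (R := R) (by intro r θ h; simp [T1, hz0 r θ h])
  have iT2 := polar_integrable cT2 (R := R) (by intro r θ h; simp [T2, hz0 r θ h])
  have step1 : ∫ ζ, dbar g ζ / (ζ - z) = ∫ w, dbar g (z + w) / w := by
    rw [← integral_add_left_eq_self _ z]
    simp
  rw [step1, ← Complex.integral_comp_polarCoord_symm, polarCoord_target]
  have step2 : ∀ p ∈ Set.Ioi (0:ℝ) ×ˢ Set.Ioo (-Real.pi) Real.pi,
      p.1 • (dbar g (z + Complex.polarCoord.symm p) / Complex.polarCoord.symm p)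
        = (1/2 : ℂ) * (T1 p + Complex.I * T2 p) := by
    rintro ⟨r, θ⟩ ⟨hr, -⟩
    have hr' : (r : ℂ) ≠ 0 := by exact_mod_cast (ne_of_gt hr)
    simp only [Complex.polarCoord_symm_apply]
    change r • (dbar g (z + r * e θ) / (r * e θ)) = (1/2 : ℂ) * (T1 (r, θ) + Complex.I * T2 (r, θ))
    simp only [T1, T2, dbar]
    set D := fderiv ℝ g (z + r * e θ)
    have e1 : D (e θ) = Real.cos θ * D 1 + Real.sin θ * D Complex.I := by
      have : e θ = Real.cos θ • (1:ℂ) + Real.sin θ • Complex.I := by simp [e]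
      rw [this, map_add, map_smul, map_smul]; simp
    have e2 : D (Complex.I * e θ) = -Real.sin θ * D 1 + Real.cos θ * D Complex.I := by
      have : Complex.I * e θ = (-Real.sin θ) • (1:ℂ) + Real.cos θ • Complex.I := by
        simp only [e, Complex.real_smul]; push_cast
        linear_combination (Complex.sin θ) * Complex.I_sq
      rw [this, map_add, map_smul, map_smul]; simp
    have hee : e θ ≠ 0 := by
      intro h; have := hen θ; rw [h] at this; simp at this
    have hcs : (Real.cos θ : ℂ)^2 + (Real.sin θ : ℂ)^2 = 1 := by
      exact_mod_cast Real.cos_sq_add_sin_sq θ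
    rw [e1, e2, Complex.real_smul]
    field_simp
    simp only [e]
    linear_combination (-(D 1) - Complex.I * D Complex.I) * hcs + 
      (-(Real.cos θ)*Real.sin θ* D Complex.I+ Real.sin θ^2 * D 1) * Complex.I_sq
  rw [setIntegral_congr_fun (measurableSet_Ioi.prod measurableSet_Ioo) step2,
    integral_const_mul, integral_add iT1 (iT2.const_mul _), integral_const_mul]
  have hder : ∀ r θ : ℝ, HasDerivAt (fun r : ℝ => g (z + r * e θ)) (T1 (r, θ)) r := by
    intro r θ
    have h1 : HasDerivAt (fun r : ℝ => z + r * e θ) (e θ) r := by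
      have := ((Complex.ofRealCLM.hasDerivAt (x := r)).mul_const (e θ)).const_add z
      simpa using this
    exact (hd _).hasFDerivAt.comp_hasDerivAt r h1
  have hder2 : ∀ r θ : ℝ, HasDerivAt (fun θ : ℝ => g (z + r * e θ)) (r * T2 (r, θ)) θ := by
    intro r θ
    have h0 : HasDerivAt e (Complex.I * e θ) θ := by
      have := ((Real.hasDerivAt_cos θ).ofReal_comp).add
        (((Real.hasDerivAt_sin θ).ofReal_comp).mul_const Complex.I)
      refine this.congr_deriv ?_
      simp only [e]; push_cast
      linear_combination -(Complex.sin θ) * Complex.I_sq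
    have h1 : HasDerivAt (fun θ : ℝ => z + r * e θ) (r * (Complex.I * e θ)) θ :=
      (h0.const_mul _).const_add z
    have := (hd _).hasFDerivAt.comp_hasDerivAt θ h1
    refine this.congr_deriv ?_
    have : (r:ℂ) * (Complex.I * e θ) = r • (Complex.I * e θ) := by simp
    rw [this, map_smul]; simp [T2]
  have I1 : ∫ p in Set.Ioi (0:ℝ) ×ˢ Set.Ioo (-Real.pi) Real.pi, T1 p
      = -(2 * Real.pi : ℂ) * g z := by
    rw [Measure.volume_eq_prod] at iT1 ⊢
    rw [IntegrableOn, ← Measure.prod_restrict] at iT1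
    rw [← Measure.prod_restrict, integral_prod_symm _ iT1]
    have : ∀ θ ∈ Set.Ioo (-Real.pi) Real.pi, ∫ r in Set.Ioi (0:ℝ), T1 (r, θ) = - g z := by
      intro θ _
      have hcs : ContDiff ℝ 1 (fun r : ℝ => g (z + r * e θ)) := by
        apply hg.comp
        apply contDiff_const.add
        exact (Complex.ofRealCLM.contDiff).mul contDiff_const
      have hcomp : HasCompactSupport (fun r : ℝ => g (z + r * e θ)) := by
        apply HasCompactSupport.intro (isCompact_Icc (a := -R) (b := R))
        intro r hr
        apply image_eq_zero_of_notMem_tsupport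
        apply hR
        simp only [norm_mul, hen, Complex.norm_real, mul_one, Real.norm_eq_abs]
        by_contra h
        exact hr (abs_le.1 (not_lt.1 h))
      have := HasCompactSupport.integral_Ioi_deriv_eq hcs hcomp 0
      simp only [(hder _ θ).deriv] at this
      simpa using this
    rw [setIntegral_congr_fun measurableSet_Ioo this]
    simp [Real.pi_pos.le]
    left; norm_cast; ring
  have I2 : ∫ p in Set.Ioi (0:ℝ) ×ˢ Set.Ioo (-Real.pi) Real.pi, T2 p = 0 := by
    rw [Measure.volume_eq_prod] at iT2 ⊢
    rw [setIntegral_prod _ iT2]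
    have : ∀ r ∈ Set.Ioi (0:ℝ), ∫ θ in Set.Ioo (-Real.pi) Real.pi, T2 (r, θ) = 0 := by
      intro r hr
      have hr' : (r : ℂ) ≠ 0 := by exact_mod_cast (ne_of_gt hr)
      have h1 : ∫ θ in (-Real.pi)..Real.pi, (r:ℂ) * T2 (r, θ) =
          g (z + r * e Real.pi) - g (z + r * e (-Real.pi)) := by
        apply intervalIntegral.integral_eq_sub_of_hasDerivAt (fun θ _ => hder2 r θ)
        apply Continuous.intervalIntegrable
        fun_prop
      rw [intervalIntegral.integral_const_mul] at h1
      have h2 : e Real.pi = e (-Real.pi) := by simp [e]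
      rw [h2, sub_self, intervalIntegral.integral_of_le (by linarith [Real.pi_pos]),
        integral_Ioc_eq_integral_Ioo] at h1
      exact (mul_eq_zero.1 h1).resolve_left hr'
    rw [setIntegral_congr_fun measurableSet_Ioi this]
    simp
  rw [I1, I2]
  ring

lemma integrable_aux_sq {b : ℝ} (hb : 0 < b) : Integrable (fun y : ℝ => ((b^2 + y^2)^2)⁻¹) := by
  have hm : 0 < min 1 (b^2) := by positivity
  refine (integrable_inv_one_add_sq.const_mul (b^2 * min 1 (b^2))⁻¹).mono' ?_ ?_
  · apply Continuous.aestronglyMeasurable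
    have : ∀ y : ℝ, (b^2 + y^2)^2 ≠ 0 := fun y => by positivity
    fun_prop (disch := exact this _)
  · refine Filter.Eventually.of_forall (fun y => ?_)
    rw [Real.norm_of_nonneg (by positivity), ← mul_inv]
    apply inv_anti₀ (by positivity)
    have h1 : min 1 (b^2) * (1 + y^2) ≤ b^2 + y^2 := by
      have e1 := min_le_left 1 (b^2)
      have e2 := min_le_right 1 (b^2)
      nlinarith [sq_nonneg y]
    nlinarith [sq_nonneg y, mul_pos hb hb, mul_nonneg (sq_nonneg b) (sq_nonneg y)]

lemma integral_aux_sq {b : ℝ} (hb : 0 < b) :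
    ∫ y : ℝ, ((b^2 + y^2)^2)⁻¹ = Real.pi / (2 * b^3) := by
  have hderiv : ∀ y : ℝ, HasDerivAt
      (fun y => y / (2 * b^2 * (b^2 + y^2)) + Real.arctan (y / b) / (2 * b^3))
      (((b^2 + y^2)^2)⁻¹) y := by
    intro y
    have h0 : b^2 + y^2 ≠ 0 := by positivity
    have h1 : HasDerivAt (fun y : ℝ => 2 * b^2 * (b^2 + y^2)) (2 * b^2 * (2 * y)) y := by
      have := (((hasDerivAt_pow 2 y).const_add (b^2)).const_mul (2 * b^2))
      simpa using this
    have h2 := (hasDerivAt_id y).div h1 (by positivity)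
    have h3 := (((hasDerivAt_id y).div_const b).arctan).div_const (2 * b^3)
    refine (h2.add h3).congr_deriv ?_
    simp only [id]
    have h4 : 1 + (y/b)^2 ≠ 0 := by positivity
    have : 1 + (y/b)^2 = (b^2 + y^2) / b^2 := by field_simp
    rw [this]
    field_simp
    ring
  have lim : ∀ l : Filter ℝ, Filter.Tendsto (fun y : ℝ => |y|) l Filter.atTop → 
      Filter.Tendsto (fun y => y / (2 * b^2 * (b^2 + y^2))) l (nhds 0) := by
    intro l hl
    have h1 : Filter.Tendsto (fun y : ℝ => (2 * b^2)⁻¹ * |y|⁻¹) l (nhds 0) := by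
      have := (tendsto_inv_atTop_zero.comp hl).const_mul ((2 * b^2)⁻¹)
      rw [mul_zero] at this
      exact this
    refine squeeze_zero_norm' ?_ h1
    filter_upwards [hl.eventually_gt_atTop 0] with y hy
    rw [norm_div, Real.norm_eq_abs, Real.norm_of_nonneg (by positivity), ← mul_inv, div_le_iff₀ (by positivity),
      inv_mul_eq_div, le_div_iff₀ (by positivity)]
    have : |y| * |y| = y^2 := by rw [← pow_two, sq_abs]
    have e : |y| * (2 * b^2 * |y|) = 2 * b^2 * y^2 := by rw [← this]; ring
    rw [e]
    have : 0 < b^2 := by positivity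
    nlinarith
  have key := integral_of_hasDerivAt_of_tendsto hderiv (integrable_aux_sq hb)
    (m := 0 + -(Real.pi/2) / (2*b^3)) (n := 0 + (Real.pi/2) / (2*b^3)) ?_ ?_
  · rw [key]; field_simp; ring
  · refine (lim _ Filter.tendsto_abs_atBot_atTop).add (Filter.Tendsto.div_const ?_ _)
    have h1 : Filter.Tendsto (fun y : ℝ => y / b) Filter.atBot Filter.atBot :=
      Filter.tendsto_id.atBot_div_const hb
    exact (tendsto_nhds_of_tendsto_nhdsWithin Real.tendsto_arctan_atBot).comp h1
  · refine (lim _ Filter.tendsto_abs_atTop_atTop).add (Filter.Tendsto.div_const ?_ _)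
    have h1 : Filter.Tendsto (fun y : ℝ => y / b) Filter.atTop Filter.atTop :=
      Filter.tendsto_id.atTop_div_const hb
    exact (tendsto_nhds_of_tendsto_nhdsWithin Real.tendsto_arctan_atTop).comp h1

lemma lintegral_outer {c : ℝ} (hc : 1 < c) :
    ∫⁻ x in Set.Ioi c, ENNReal.ofReal ((x - c) / (2 * (Real.sqrt (x^2-1))^3))
      = ENNReal.ofReal ((c - Real.sqrt (c^2-1)) / 2) := by
  have hpos : ∀ x ∈ Set.Ici c, 0 < x^2 - 1 := by
    intro x hx; have : c ≤ x := hx; nlinarith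
  have hderiv : ∀ x ∈ Set.Ici c, HasDerivAt (fun x => (c * x - 1) / (2 * Real.sqrt (x^2-1)))
      ((x - c) / (2 * (Real.sqrt (x^2-1))^3)) x := by
    intro x hx
    have h0 := hpos x hx
    have hs : 0 < Real.sqrt (x^2-1) := Real.sqrt_pos.2 h0
    have h1 : HasDerivAt (fun x : ℝ => x^2 - 1) (2 * x) x := by
      simpa using (hasDerivAt_pow 2 x).sub_const 1
    have h2 := (h1.sqrt h0.ne').const_mul 2
    have h3 : HasDerivAt (fun x : ℝ => c * x - 1) c x := by
      simpa using ((hasDerivAt_id x).const_mul c).sub_const 1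
    refine (h3.div h2 (by positivity)).congr_deriv ?_
    have hsq := Real.sq_sqrt h0.le
    set s := Real.sqrt (x^2-1)
    field_simp
    rw [hsq]; ring
  have hnn : ∀ x ∈ Set.Ioi c, 0 ≤ (x - c) / (2 * (Real.sqrt (x^2-1))^3) := by
    intro x hx; have : c < x := hx
    apply div_nonneg (by linarith) (by positivity)
  have hlim : Filter.Tendsto (fun x => (c * x - 1) / (2 * Real.sqrt (x^2-1))) Filter.atTop
      (nhds (c/2)) := by
    have h1 : Filter.Tendsto (fun x : ℝ => (c - x⁻¹) / (2 * Real.sqrt (1 - (x⁻¹)^2))) Filter.atTop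
        (nhds ((c - 0) / (2 * Real.sqrt (1 - 0^2)))) := by
      have hi := tendsto_inv_atTop_zero (𝕜 := ℝ)
      refine (tendsto_const_nhds.sub hi).div (Filter.Tendsto.const_mul _ ?_) (by simp)
      exact (Real.continuous_sqrt.tendsto _).comp (tendsto_const_nhds.sub (hi.pow 2))
    have : (c - 0) / (2 * Real.sqrt (1 - 0^2)) = c/2 := by simp
    rw [this] at h1
    refine h1.congr' ?_
    filter_upwards [Filter.eventually_gt_atTop 1] with x hx
    have hx0 : 0 < x := by linarith
    have : 1 - (x⁻¹)^2 = (x^2 - 1) / x^2 := by field_simp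
    rw [this, Real.sqrt_div (by nlinarith), Real.sqrt_sq hx0.le]
    have hs : 0 < Real.sqrt (x^2-1) := Real.sqrt_pos.2 (by nlinarith)
    field_simp
  have hint := integrableOn_Ioi_deriv_of_nonneg' hderiv hnn hlim
  have hval := integral_Ioi_of_hasDerivAt_of_nonneg' hderiv hnn hlim
  rw [← ofReal_integral_eq_lintegral_ofReal hint
    ((ae_restrict_iff' measurableSet_Ioi).2 (Filter.Eventually.of_forall hnn)), hval]
  congr 1
  have h0 := hpos c (Set.mem_Ici.2 le_rfl)
  have hs : 0 < Real.sqrt (c^2-1) := Real.sqrt_pos.2 h0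
  have hsq := Real.sq_sqrt h0.le
  set s := Real.sqrt (c^2-1)
  field_simp
  linear_combination hsq

lemma lintegral_halfplane {c : ℝ} (hc : 1 < c) :
    ∫⁻ u in {u : ℂ | c < u.re}, ENNReal.ofReal ((u.re - c) * (Real.pi⁻¹ * ((‖u‖^2 - 1)^2)⁻¹))
      = ENNReal.ofReal ((c - Real.sqrt (c^2-1)) / 2) := by
  rw [← lintegral_outer hc]
  have hms : MeasurableSet {u : ℂ | c < u.re} := measurableSet_lt measurable_const Complex.measurable_re
  rw [← lintegral_indicator hms, ← lintegral_indicator measurableSet_Ioi]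
  rw [← Complex.volume_preserving_equiv_real_prod.symm.lintegral_comp_emb
    Complex.measurableEquivRealProd.symm.measurableEmbedding]
  rw [Measure.volume_eq_prod, lintegral_prod]
  · congr 1
    ext x
    by_cases hx : c < x
    · have hb : 0 < Real.sqrt (x^2 - 1) := Real.sqrt_pos.2 (by nlinarith)
      have hsq : (Real.sqrt (x^2 - 1))^2 = x^2 - 1 := Real.sq_sqrt (by nlinarith)
      have e : ∀ y : ℝ, Set.indicator {u : ℂ | c < u.re}
          (fun u => ENNReal.ofReal ((u.re - c) * (Real.pi⁻¹ * ((‖u‖^2 - 1)^2)⁻¹)))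
          (Complex.measurableEquivRealProd.symm (x, y))
          = ENNReal.ofReal ((x - c) * Real.pi⁻¹) *
            ENNReal.ofReal ((((Real.sqrt (x^2-1))^2 + y^2)^2)⁻¹) := by
        intro y
        rw [Set.indicator_of_mem (by simpa using hx), ← ENNReal.ofReal_mul
          (mul_nonneg (by linarith) (by positivity))]
        congr 1
        rw [hsq, Complex.sq_norm, Complex.normSq_apply]
        simp only [Complex.measurableEquivRealProd_symm_apply]
        rw [mul_assoc]
        congr 4
        ring
      simp_rw [e]
      rw [lintegral_const_mul' _ _ ENNReal.ofReal_ne_top,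
        ← ofReal_integral_eq_lintegral_ofReal (integrable_aux_sq hb)
          (Filter.Eventually.of_forall fun y => by positivity), integral_aux_sq hb,
        ← ENNReal.ofReal_mul (mul_nonneg (by linarith) (by positivity)),
        Set.indicator_of_mem (by simpa using hx)]
      congr 1
      have := Real.pi_pos
      field_simp
    · rw [Set.indicator_of_notMem (by simpa using hx)]
      have : ∀ y : ℝ, Set.indicator {u : ℂ | c < u.re}
          (fun u => ENNReal.ofReal ((u.re - c) * (Real.pi⁻¹ * ((‖u‖^2 - 1)^2)⁻¹)))
          (Complex.measurableEquivRealProd.symm (x, y)) = 0 := by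
        intro y
        rw [Set.indicator_of_notMem (by simpa using hx)]
      simp_rw [this]
      simp
  · apply Measurable.aemeasurable
    have hm : Measurable (Set.indicator {u : ℂ | c < u.re}
        (fun u => ENNReal.ofReal ((u.re - c) * (Real.pi⁻¹ * ((‖u‖^2 - 1)^2)⁻¹)))) := by
      apply Measurable.indicator _ hms
      fun_prop
    exact hm.comp Complex.measurableEquivRealProd.symm.measurable

/-- The normalised hyperbolic measure on the unit disc. -/
noncomputable def hypMu : Measure ℂ :=
  (volume.restrict (ball (0 : ℂ) 1)).withDensity
    (fun ζ => ENNReal.ofReal (Real.pi⁻¹ * ((1 - ‖ζ‖ ^ 2) ^ 2)⁻¹))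

lemma hypMu_dens_meas :
    Measurable (fun ζ : ℂ => ENNReal.ofReal (Real.pi⁻¹ * ((1 - ‖ζ‖ ^ 2) ^ 2)⁻¹)) := by
  fun_prop

lemma det_complex_mul (a : ℂ) :
    ((ContinuousLinearMap.toSpanSingleton ℂ a).restrictScalars ℝ : ℂ →L[ℝ] ℂ).det
      = Complex.normSq a := by
  rw [← Algebra.norm_complex_apply]
  have h : (((ContinuousLinearMap.toSpanSingleton ℂ a).restrictScalars ℝ : ℂ →L[ℝ] ℂ) : ℂ →ₗ[ℝ] ℂ)
      = (LinearMap.toSpanSingleton ℂ ℂ a).restrictScalars ℝ := by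
    ext <;> simp
  rw [ContinuousLinearMap.det, h, LinearMap.det_restrictScalars]
  congr 1
  simp [LinearMap.det_ring]

lemma norm_mobius_sub_one {ζ z e : ℂ} (he : ‖e‖ = 1) (hzζ : z ≠ ζ) :
    ‖e * ((1 - (starRingEnd ℂ) ζ * z) / (ζ - z))‖^2 - 1
      = (1 - ‖ζ‖^2) * (1 - ‖z‖^2) / ‖ζ - z‖^2 := by
  have h0 : ‖ζ - z‖^2 ≠ 0 := by
    have : ζ - z ≠ 0 := sub_ne_zero.2 hzζ.symm
    positivity
  rw [norm_mul, he, one_mul, norm_div, div_pow, div_sub_one h0]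
  congr 1
  simp only [Complex.sq_norm, Complex.normSq_apply]
  simp
  ring

lemma mobius_hasDerivAt {ζ z e : ℂ} (hzζ : z ≠ ζ) :
    HasDerivAt (fun z => e * ((1 - (starRingEnd ℂ) ζ * z) / (ζ - z)))
      (e * ((1 - (starRingEnd ℂ) ζ * ζ) / (ζ - z)^2)) z := by
  have h0 : ζ - z ≠ 0 := sub_ne_zero.2 hzζ.symm
  have h1 : HasDerivAt (fun z => 1 - (starRingEnd ℂ) ζ * z) (-(starRingEnd ℂ) ζ) z := by
    simpa using ((hasDerivAt_id z).const_mul ((starRingEnd ℂ) ζ)).const_sub 1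
  have h2 : HasDerivAt (fun z => ζ - z) (-1) z := by
    simpa using (hasDerivAt_id z).const_sub ζ
  refine ((h1.div h2 h0).const_mul e).congr_deriv ?_
  congr 2
  ring

lemma mobius_inj {ζ e : ℂ} (hζ : ‖ζ‖ < 1) (he : ‖e‖ = 1) {z w : ℂ} (hz : z ≠ ζ) (hw : w ≠ ζ)
    (h : e * ((1 - (starRingEnd ℂ) ζ * z) / (ζ - z)) = e * ((1 - (starRingEnd ℂ) ζ * w) / (ζ - w))) :
    z = w := by
  have he0 : e ≠ 0 := by intro h; simp [h] at he
  have h := mul_left_cancel₀ he0 h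
  rw [div_eq_div_iff (sub_ne_zero.2 hz.symm) (sub_ne_zero.2 hw.symm)] at h
  have h1 : (1 - (starRingEnd ℂ) ζ * ζ) * (z - w) = 0 := by linear_combination h
  have h2 : (1 - (starRingEnd ℂ) ζ * ζ) ≠ 0 := by
    rw [mul_comm, Complex.mul_conj, Complex.normSq_eq_norm_sq]
    norm_cast
    have := norm_nonneg ζ
    nlinarith
  exact sub_eq_zero.1 ((mul_eq_zero.1 h1).resolve_left h2)

lemma bath_lintegral {ζ e : ℂ} (hζ : ‖ζ‖ < 1) (he : ‖e‖ = 1) {c : ℝ} (hc : 1 < c) :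
    ∫⁻ z, ENNReal.ofReal ((e * ((1 - (starRingEnd ℂ) ζ * z) / (ζ - z))).re - c) ∂hypMu
      ≤ ENNReal.ofReal ((c - Real.sqrt (c^2-1)) / 2) := by
  let u : ℂ → ℂ := fun z => e * ((1 - (starRingEnd ℂ) ζ * z) / (ζ - z))
  have hu : Measurable u := by fun_prop
  let S : Set ℂ := ball 0 1 ∩ {z | c < (u z).re}
  have hS : MeasurableSet S :=
    measurableSet_ball.inter (measurableSet_lt measurable_const (Complex.measurable_re.comp hu))
  have hSζ : ∀ z ∈ S, z ≠ ζ := by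
    rintro z ⟨_, hz⟩ rfl
    simp [u] at hz
    linarith
  let u' : ℂ → ℂ →L[ℝ] ℂ := fun z =>
    (ContinuousLinearMap.toSpanSingleton ℂ (e * ((1 - (starRingEnd ℂ) ζ * ζ) / (ζ - z)^2))).restrictScalars ℝ
  have hder : ∀ z ∈ S, HasFDerivWithinAt u (u' z) S z := fun z hz =>
    ((mobius_hasDerivAt (hSζ z hz)).hasFDerivAt.restrictScalars ℝ).hasFDerivWithinAt
  have hinj : Set.InjOn u S := fun z hz w hw h => mobius_inj hζ he (hSζ z hz) (hSζ w hw) h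
  have key := lintegral_image_eq_lintegral_abs_det_fderiv_mul volume hS hder hinj
    (fun u => ENNReal.ofReal ((u.re - c) * (Real.pi⁻¹ * ((‖u‖^2 - 1)^2)⁻¹)))
  rw [← lintegral_halfplane hc]
  calc ∫⁻ z, ENNReal.ofReal ((u z).re - c) ∂hypMu
      = ∫⁻ z in ball 0 1, ENNReal.ofReal (Real.pi⁻¹ * ((1 - ‖z‖ ^ 2) ^ 2)⁻¹) *
          ENNReal.ofReal ((u z).re - c) := by
        unfold hypMu
        rw [lintegral_withDensity_eq_lintegral_mul _ hypMu_dens_meas (by fun_prop)]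
        rfl
    _ = ∫⁻ z in S, ENNReal.ofReal (Real.pi⁻¹ * ((1 - ‖z‖ ^ 2) ^ 2)⁻¹) *
          ENNReal.ofReal ((u z).re - c) := by
        symm
        rw [← lintegral_indicator hS, ← lintegral_indicator measurableSet_ball]
        congr 1
        ext z
        by_cases hz : z ∈ ball (0:ℂ) 1
        · by_cases hz2 : c < (u z).re
          · have hzS : z ∈ S := ⟨hz, hz2⟩
            rw [Set.indicator_of_mem hzS, Set.indicator_of_mem hz]
          · rw [Set.indicator_of_notMem (fun h : z ∈ S => hz2 h.2), Set.indicator_of_mem hz,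
              ENNReal.ofReal_of_nonpos (by linarith [not_lt.1 hz2] : (u z).re - c ≤ 0), mul_zero]
        · rw [Set.indicator_of_notMem (fun h : z ∈ S => hz h.1), Set.indicator_of_notMem hz]
    _ = ∫⁻ z in S, ENNReal.ofReal |(u' z).det| *
          ENNReal.ofReal (((u z).re - c) * (Real.pi⁻¹ * ((‖u z‖^2 - 1)^2)⁻¹)) := by
        apply setLIntegral_congr_fun hS
        intro z hz
        have hz1 : ‖z‖ < 1 := by simpa using hz.1
        have hz2 : c < (u z).re := hz.2
        have hzz := hSζ z hz
        have h1 := norm_mobius_sub_one he hzz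
        have hnz : ‖ζ - z‖ ≠ 0 := norm_ne_zero_iff.2 (sub_ne_zero.2 hzz.symm)
        have a1 : 1 - ‖ζ‖^2 ≠ 0 := by have := norm_nonneg ζ; nlinarith
        have a2 : 1 - ‖z‖^2 ≠ 0 := by have := norm_nonneg z; nlinarith
        simp only [u']
        rw [det_complex_mul, abs_of_nonneg (Complex.normSq_nonneg _),
          ← ENNReal.ofReal_mul (by positivity), ← ENNReal.ofReal_mul (Complex.normSq_nonneg _)]
        congr 1
        simp only [u] at *
        rw [h1, Complex.normSq_eq_norm_sq, norm_mul, he, norm_div, norm_pow]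
        have h2 : ‖1 - (starRingEnd ℂ) ζ * ζ‖^2 = (1 - ‖ζ‖^2)^2 := by
          rw [mul_comm, Complex.mul_conj, Complex.normSq_eq_norm_sq]
          rw [show (1 - ((‖ζ‖^2 : ℝ) : ℂ)) = ((1 - ‖ζ‖^2 : ℝ) : ℂ) by push_cast; ring,
            Complex.norm_real, Real.norm_eq_abs, sq_abs]
        rw [one_mul, div_pow, h2]
        have := Real.pi_pos
        field_simp
    _ = _ := key.symm
    _ ≤ _ := by
        apply lintegral_mono_set
        rintro _ ⟨z, hz, rfl⟩
        exact hz.2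

lemma bath_c {ζ e : ℂ} (hζ : ‖ζ‖ < 1) (he : ‖e‖ = 1) {c : ℝ} (hc : 1 < c) {E : Set ℂ}
    (hE : hypMu E ≠ ⊤)
    (hint : IntegrableOn (fun z => (1 - (starRingEnd ℂ) ζ * z) / (ζ - z)) E hypMu) :
    ∫ z in E, (e * ((1 - (starRingEnd ℂ) ζ * z) / (ζ - z))).re ∂hypMu
      ≤ c * hypMu.real E + (c - Real.sqrt (c^2-1)) / 2 := by
  let v : ℂ → ℝ := fun z => (e * ((1 - (starRingEnd ℂ) ζ * z) / (ζ - z))).re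
  have hv : IntegrableOn v E hypMu := by
    have := (hint.const_mul e)
    exact this.re
  haveI : IsFiniteMeasure (hypMu.restrict E) := ⟨by simpa using hE.lt_top⟩
  have hv2 : Integrable (fun z => v z - c) (hypMu.restrict E) := hv.sub (integrable_const c)
  have h1 : ∫ z in E, v z ∂hypMu = ∫ z in E, (v z - c) ∂hypMu + c * hypMu.real E := by
    rw [integral_sub hv (integrable_const c)]
    simp [mul_comm]
  have h0 : 0 ≤ (c - Real.sqrt (c^2-1)) / 2 := by
    have : Real.sqrt (c^2-1) ≤ c := by
      rw [Real.sqrt_le_left (by linarith)]; linarith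
    linarith
  have h2 : ∫ z in E, (v z - c) ∂hypMu ≤ (c - Real.sqrt (c^2-1)) / 2 := by
    calc ∫ z in E, (v z - c) ∂hypMu ≤ ∫ z in E, max (v z - c) 0 ∂hypMu :=
          integral_mono hv2 hv2.pos_part (fun z => le_max_left _ _)
      _ = (∫⁻ z in E, ENNReal.ofReal (max (v z - c) 0) ∂hypMu).toReal :=
          integral_eq_lintegral_of_nonneg_ae (Filter.Eventually.of_forall fun z => le_max_right _ _)
            hv2.pos_part.aestronglyMeasurable
      _ ≤ _ := by
          apply ENNReal.toReal_le_of_le_ofReal h0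
          refine le_trans (setLIntegral_le_lintegral _ _) ?_
          refine le_trans (le_of_eq ?_) (bath_lintegral hζ he hc)
          simp [v]
  change ∫ z in E, v z ∂hypMu ≤ _
  linarith

lemma bath {ζ : ℂ} (hζ : ‖ζ‖ < 1) {E : Set ℂ} (hE : hypMu E ≠ ⊤)
    (hint : IntegrableOn (fun z => (1 - (starRingEnd ℂ) ζ * z) / (ζ - z)) E hypMu) :
    ‖∫ z in E, (1 - (starRingEnd ℂ) ζ * z) / (ζ - z) ∂hypMu‖
      ≤ Real.sqrt (hypMu.real E + hypMu.real E ^ 2) := by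
  set A := hypMu.real E with hA
  have hA0 : 0 ≤ A := measureReal_nonneg
  set X := ∫ z in E, (1 - (starRingEnd ℂ) ζ * z) / (ζ - z) ∂hypMu with hX
  rcases hA0.eq_or_lt with h | hApos
  · have : hypMu E = 0 := by
      rw [← measureReal_eq_zero_iff hE, ← hA, ← h]
    have : X = 0 := by
      rw [hX, Measure.restrict_eq_zero.2 this]; simp
    rw [this]; simp
  · obtain ⟨e, he, heX⟩ : ∃ e : ℂ, ‖e‖ = 1 ∧ e * X = ‖X‖ := by
      by_cases hX0 : X = 0
      · exact ⟨1, by simp, by simp [hX0]⟩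
      · refine ⟨(starRingEnd ℂ) X / ‖X‖, ?_, ?_⟩
        · have : ‖X‖ ≠ 0 := norm_ne_zero_iff.2 hX0
          simp [this]
        · have : (‖X‖ : ℂ) ≠ 0 := by exact_mod_cast norm_ne_zero_iff.2 hX0
          field_simp
          rw [mul_comm, Complex.mul_conj, Complex.normSq_eq_norm_sq]; push_cast; ring
    set S := Real.sqrt (A + A^2) with hS
    have hSpos : 0 < S := Real.sqrt_pos.2 (by positivity)
    have hSsq : S^2 = A + A^2 := Real.sq_sqrt (by positivity)
    set c := (1 + 2*A) / (2*S) with hcdef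
    have hc2 : c^2 - 1 = (1/(2*S))^2 := by
      rw [hcdef]; field_simp; rw [hSsq]; ring
    have hc0 : 0 < c := by positivity
    have hc : 1 < c := by
      have : 0 < (1/(2*S))^2 := by positivity
      nlinarith
    have h := bath_c hζ he hc hE hint
    have e1 : ∫ z in E, (e * ((1 - (starRingEnd ℂ) ζ * z) / (ζ - z))).re ∂hypMu = ‖X‖ := by
      have : ∫ z in E, (e * ((1 - (starRingEnd ℂ) ζ * z) / (ζ - z))).re ∂hypMu
        = (∫ z in E, e * ((1 - (starRingEnd ℂ) ζ * z) / (ζ - z)) ∂hypMu).re :=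
        integral_re (hint.const_mul e)
      rw [this, integral_const_mul, ← hX, heX, Complex.ofReal_re]
    rw [e1, hc2, Real.sqrt_sq (by positivity)] at h
    refine h.trans (le_of_eq ?_)
    rw [← hA, hcdef]
    field_simp
    rw [hSsq]; ring

lemma contDiff_of_tsup {F : ℂ → ℂ} (h : ∀ x ∈ tsupport F, ContDiffAt ℝ 1 F x) :
    ContDiff ℝ 1 F := by
  rw [contDiff_iff_contDiffAt]
  intro x
  by_cases hx : x ∈ tsupport F
  · exact h x hx
  · have : F =ᶠ[nhds x] fun _ => 0 := notMem_tsupport_iff_eventuallyEq.1 hx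
    exact contDiffAt_const.congr_of_eventuallyEq this

lemma dbar_mul {F G : ℂ → ℂ} {z : ℂ} (hF : DifferentiableAt ℝ F z) (hG : DifferentiableAt ℝ G z) :
    dbar (fun w => F w * G w) z = dbar F z * G z + F z * dbar G z := by
  unfold dbar
  rw [fderiv_fun_mul hF hG]
  simp
  ring

lemma dbar_sub {F G : ℂ → ℂ} {z : ℂ} (hF : DifferentiableAt ℝ F z) (hG : DifferentiableAt ℝ G z) :
    dbar (fun w => F w - G w) z = dbar F z - dbar G z := by
  unfold dbar
  rw [fderiv_fun_sub hF hG]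
  simp
  ring

lemma dbar_const_mul {F : ℂ → ℂ} {z : ℂ} (c : ℂ) (hF : DifferentiableAt ℝ F z) :
    dbar (fun w => c * F w) z = c * dbar F z := by
  unfold dbar
  rw [fderiv_const_mul hF]
  simp
  ring

lemma dbar_holo {F : ℂ → ℂ} {z : ℂ} (hF : DifferentiableAt ℂ F z) : dbar F z = 0 := by
  have h := (hF.hasDerivAt.hasFDerivAt.restrictScalars ℝ).fderiv
  unfold dbar
  rw [h]
  simp
  rw [← mul_assoc, Complex.I_mul_I]; ring

lemma dbar_conj (z : ℂ) : dbar (fun w => (starRingEnd ℂ) w) z = 1 := by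
  have h : HasFDerivAt (fun w => (starRingEnd ℂ) w) (Complex.conjCLE : ℂ →L[ℝ] ℂ) z :=
    Complex.conjCLE.hasFDerivAt
  unfold dbar
  rw [h.fderiv]
  simp

lemma dbar_inv {F : ℂ → ℂ} {z : ℂ} (hF : DifferentiableAt ℝ F z) (h0 : F z ≠ 0) :
    dbar (fun w => (F w)⁻¹) z = - dbar F z / (F z)^2 := by
  have h := ((hasDerivAt_inv h0).hasFDerivAt.restrictScalars ℝ).comp z hF.hasFDerivAt
  have h2 : fderiv ℝ (fun w => (F w)⁻¹) z = _ := h.fderiv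
  unfold dbar
  rw [h2]
  simp
  field_simp
  ring

/-- The function `conj z / (1 - |z|^2)`. -/
noncomputable def phiD (z : ℂ) : ℂ := (starRingEnd ℂ) z * (1 - z * (starRingEnd ℂ) z)⁻¹

lemma one_sub_mul_conj (z : ℂ) : 1 - z * (starRingEnd ℂ) z = ((1 - ‖z‖^2 : ℝ) : ℂ) := by
  rw [Complex.mul_conj, Complex.normSq_eq_norm_sq]; push_cast; ring

lemma one_sub_ne {z : ℂ} (hz : ‖z‖ < 1) : 1 - z * (starRingEnd ℂ) z ≠ 0 := by
  rw [one_sub_mul_conj]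
  have := norm_nonneg z
  have : 1 - ‖z‖^2 ≠ 0 := by nlinarith
  exact_mod_cast this

lemma contDiff_conj : ContDiff ℝ 1 (fun w : ℂ => (starRingEnd ℂ) w) :=
  Complex.conjCLE.contDiff

lemma phiD_contDiffAt {z : ℂ} (hz : ‖z‖ < 1) : ContDiffAt ℝ 1 phiD z := by
  unfold phiD
  refine contDiff_conj.contDiffAt.mul (ContDiffAt.inv ?_ (one_sub_ne hz))
  exact contDiffAt_const.sub (contDiffAt_id.mul contDiff_conj.contDiffAt)

lemma dbar_phiD {z : ℂ} (hz : ‖z‖ < 1) : dbar phiD z = ((((1 - ‖z‖^2)^2)⁻¹ : ℝ) : ℂ) := by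
  have h0 := one_sub_ne hz
  have hc : DifferentiableAt ℝ (fun w : ℂ => (starRingEnd ℂ) w) z :=
    contDiff_conj.contDiffAt.differentiableAt (by norm_num)
  have hm : DifferentiableAt ℝ (fun w : ℂ => w * (starRingEnd ℂ) w) z :=
    differentiableAt_id.mul hc
  have hs : DifferentiableAt ℝ (fun w : ℂ => 1 - w * (starRingEnd ℂ) w) z :=
    (differentiableAt_const 1).sub hm
  have e1 : dbar (fun w : ℂ => w * (starRingEnd ℂ) w) z = z := by
    have := dbar_mul (differentiableAt_fun_id (𝕜 := ℝ) (x := z)) hc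
    rw [this, dbar_conj, dbar_holo differentiableAt_fun_id]; ring
  have e2 : dbar (fun w : ℂ => 1 - w * (starRingEnd ℂ) w) z = - z := by
    rw [dbar_sub (differentiableAt_const 1) hm, e1, dbar_holo (differentiableAt_const 1)]; ring
  unfold phiD
  rw [dbar_mul hc (hs.fun_inv h0), dbar_conj, dbar_inv hs h0, e2]
  push_cast
  rw [show (1 - (‖z‖:ℂ)^2) = 1 - z * (starRingEnd ℂ) z by rw [one_sub_mul_conj]; push_cast; ring]
  field_simp
  ring

lemma hypMu_integral {F : ℂ → ℂ} :
    ∫ z, F z ∂hypMu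
      = ∫ z in ball 0 1, ((Real.pi⁻¹ * ((1 - ‖z‖ ^ 2) ^ 2)⁻¹ : ℝ) : ℂ) * F z := by
  unfold hypMu
  rw [integral_withDensity_eq_integral_toReal_smul hypMu_dens_meas (by simp)]
  congr 1
  ext z
  rw [ENNReal.toReal_ofReal (by have := Real.pi_pos; positivity)]
  simp

/-- The truncated kernel `1/|w|`. -/
noncomputable def hK (w : ℂ) : ℝ := (ball (0:ℂ) 2).indicator (fun w => ‖w‖⁻¹) w

lemma hK_integrable : Integrable hK := by
  have := (integrable_fun_norm_addHaar (E := ℂ) volume (f := (Set.Iio (2:ℝ)).indicator fun r => r⁻¹)).2 ?_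
  · convert this using 1
    ext w
    simp [hK, Set.indicator]
  · have h1 : IntegrableOn ((Set.Ioo (0:ℝ) 2).indicator fun _ => (1:ℝ)) (Set.Ioi 0) :=
      ((integrable_indicator_iff measurableSet_Ioo).2 (integrableOn_const (by simp))).integrableOn
    refine h1.congr_fun ?_ measurableSet_Ioi
    intro r hr
    have hr : 0 < r := hr
    by_cases h2 : r < 2
    · simp [h2, hr, hr.ne']
    · simp [h2]

lemma hypMu_restrict_le {E : Set ℂ} {r : ℝ} (hr : r < 1) (hE : E ⊆ closedBall 0 r) :
    hypMu.restrict E ≤ ENNReal.ofReal (Real.pi⁻¹ * ((1 - r ^ 2) ^ 2)⁻¹) • volume := by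
  refine (Measure.restrict_mono_set _ hE).trans ?_
  rw [Measure.le_iff]
  intro s hs
  rw [Measure.restrict_apply hs, hypMu, withDensity_apply _ (hs.inter isClosed_closedBall.measurableSet)]
  rw [Measure.restrict_restrict (hs.inter isClosed_closedBall.measurableSet)]
  calc _ ≤ ∫⁻ z in s ∩ closedBall 0 r ∩ ball 0 1, ENNReal.ofReal (Real.pi⁻¹ * ((1 - r ^ 2) ^ 2)⁻¹) := by
        apply setLIntegral_mono measurable_const
        rintro z ⟨⟨_, h1⟩, _⟩
        have h1 : ‖z‖ ≤ r := by simpa using h1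
        have := norm_nonneg z
        apply ENNReal.ofReal_le_ofReal
        have := Real.pi_pos
        have : 0 < 1 - r^2 := by nlinarith
        gcongr
    _ ≤ _ := by
        rw [setLIntegral_const]
        simp only [Measure.smul_apply, smul_eq_mul]
        gcongr
        intro z hz; exact hz.1.1

lemma hypMu_compact {E : Set ℂ} {r : ℝ} (hr : r < 1) (hE : E ⊆ closedBall 0 r) :
    hypMu E < ⊤ := by
  have h1 := hypMu_restrict_le hr (subset_refl (closedBall (0:ℂ) r)) Set.univ
  have h3 := hypMu_restrict_le hr hE (closedBall (0:ℂ) r)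
  have h2 : hypMu E ≤ hypMu.restrict E (closedBall (0:ℂ) r) := by
    rw [Measure.restrict_apply isClosed_closedBall.measurableSet]
    exact measure_mono (fun z hz => ⟨hE hz, hz⟩)
  refine (h2.trans h3).trans_lt ?_
  simp only [Measure.smul_apply, smul_eq_mul]
  exact ENNReal.mul_lt_top (by simp) measure_closedBall_lt_top

lemma norm_inv_le_hK {ζ z : ℂ} (hζ : ‖ζ‖ < 1) (hz : ‖z‖ < 1) : ‖(ζ - z)⁻¹‖ ≤ hK (ζ - z) := by
  have : ζ - z ∈ ball (0:ℂ) 2 := by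
    have := norm_sub_le ζ z
    simp; linarith
  rw [hK, Set.indicator_of_mem this, norm_inv]

lemma hK_nonneg (w : ℂ) : 0 ≤ hK w := by
  unfold hK; exact Set.indicator_nonneg (fun _ _ => by positivity) _

lemma kernel_int {ζ : ℂ} (hζ : ‖ζ‖ < 1) {E : Set ℂ} {r : ℝ} (hr : r < 1) (hEm : MeasurableSet E)
    (hE : E ⊆ closedBall 0 r) : IntegrableOn (fun z => (ζ - z)⁻¹) E hypMu := by
  have h1 : Integrable (fun z => hK (ζ - z)) := hK_integrable.comp_sub_left ζ
  have h2 : Integrable (fun z => hK (ζ - z)) (hypMu.restrict E) :=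
    (h1.smul_measure (by simp)).mono_measure (hypMu_restrict_le hr hE)
  refine h2.mono' (by fun_prop) ?_
  filter_upwards [ae_restrict_mem hEm] with z hz
  have hz : ‖z‖ ≤ r := by simpa using hE hz
  exact norm_inv_le_hK hζ (hz.trans_lt hr)

lemma kernel_int2 {ζ : ℂ} (hζ : ‖ζ‖ < 1) {E : Set ℂ} {r : ℝ} (hr : r < 1) (hEm : MeasurableSet E)
    (hE : E ⊆ closedBall 0 r) :
    IntegrableOn (fun z => (1 - (starRingEnd ℂ) ζ * z) / (ζ - z)) E hypMu := by
  have h := kernel_int hζ hr hEm hE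
  have : Integrable (fun z => 2 * ‖(ζ - z)⁻¹‖) (hypMu.restrict E) := h.norm.const_mul 2
  refine this.mono' (Measurable.aestronglyMeasurable (by fun_prop)) ?_
  filter_upwards [ae_restrict_mem hEm] with z hz
  have hz : ‖z‖ ≤ r := by simpa using hE hz
  rw [div_eq_mul_inv, norm_mul]
  gcongr
  refine (norm_sub_le _ _).trans ?_
  rw [norm_mul, RCLike.norm_conj, norm_one]
  have := norm_nonneg z
  have := norm_nonneg ζ
  nlinarith

lemma hypMu_integral_supp {F : ℂ → ℂ} (hF : ∀ z, 1 ≤ ‖z‖ → F z = 0) :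
    (Real.pi : ℂ) * ∫ z, F z ∂hypMu = ∫ z, ((((1 - ‖z‖ ^ 2) ^ 2)⁻¹ : ℝ) : ℂ) * F z := by
  rw [hypMu_integral, setIntegral_eq_integral_of_forall_compl_eq_zero, ← integral_const_mul]
  · congr 1
    ext z
    have : (Real.pi : ℂ) ≠ 0 := by exact_mod_cast Real.pi_ne_zero
    push_cast
    field_simp
  · intro z hz
    rw [hF z (by simpa using hz), mul_zero]

lemma dbar_phi_integral {g : ℂ → ℂ} (hg : ContDiff ℝ 1 g) {r : ℝ} (hr : r < 1)
    (hgs : tsupport g ⊆ closedBall 0 r) :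
    ∫ ζ, dbar g ζ * phiD ζ = -((Real.pi : ℂ) * ∫ z, g z ∂hypMu) := by
  have hc : HasCompactSupport g :=
    (isCompact_closedBall (0:ℂ) r).of_isClosed_subset (isClosed_tsupport g) hgs
  have hlt : ∀ z ∈ tsupport g, ‖z‖ < 1 := fun z hz => by
    have : ‖z‖ ≤ r := by simpa using hgs hz
    linarith
  let F := fun z => g z * phiD z
  have hts : tsupport F ⊆ tsupport g := closure_mono (by
    intro z hz h0
    exact hz (by simp [F, h0]))
  have hF : ContDiff ℝ 1 F := contDiff_of_tsup (fun z hz =>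
    hg.contDiffAt.mul (phiD_contDiffAt (hlt z (hts hz))))
  have hFc : HasCompactSupport F := hc.mono' (subset_closure.trans hts)
  have h0 := integral_dbar hF hFc
  have hd : ∀ z, dbar F z = dbar g z * phiD z + ((((1 - ‖z‖ ^ 2) ^ 2)⁻¹ : ℝ) : ℂ) * g z := by
    intro z
    by_cases hz : z ∈ tsupport g
    · have := hlt z hz
      rw [dbar_mul (hg.differentiable (by norm_num) z)
        ((phiD_contDiffAt this).differentiableAt (by norm_num)), dbar_phiD this]
      ring
    · rw [dbar_support (fun h => hz (hts h)), dbar_support hz, image_eq_zero_of_notMem_tsupport hz]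
      simp
  have hcont2 : Continuous (fun z : ℂ => ((((1 - ‖z‖ ^ 2) ^ 2)⁻¹ : ℝ) : ℂ) * g z) := by
    rw [continuous_iff_continuousAt]
    intro z
    by_cases hz : z ∈ tsupport g
    · have hz1 := hlt z hz
      have : (1 - ‖z‖^2)^2 ≠ 0 := by
        have := norm_nonneg z
        have : 0 < 1 - ‖z‖^2 := by nlinarith
        positivity
      refine ContinuousAt.mul ?_ hg.continuous.continuousAt
      refine Complex.continuous_ofReal.continuousAt.comp ?_
      exact ContinuousAt.inv₀ (by fun_prop) this
    · have : (fun z : ℂ => ((((1 - ‖z‖ ^ 2) ^ 2)⁻¹ : ℝ) : ℂ) * g z) =ᶠ[nhds z] fun _ => 0 := by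
        filter_upwards [notMem_tsupport_iff_eventuallyEq.1 hz] with w hw
        rw [hw]; simp
      exact continuousAt_const.congr this.symm
  have hi2 : Integrable (fun z : ℂ => ((((1 - ‖z‖ ^ 2) ^ 2)⁻¹ : ℝ) : ℂ) * g z) :=
    hcont2.integrable_of_hasCompactSupport hc.mul_left
  have hi1 : Integrable (fun z : ℂ => dbar g z * phiD z) := by
    have : (fun z : ℂ => dbar g z * phiD z) =
      fun z => dbar F z - ((((1 - ‖z‖ ^ 2) ^ 2)⁻¹ : ℝ) : ℂ) * g z := by
        ext z; rw [hd]; ring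
    rw [this]
    exact ((dbar_continuous hF).integrable_of_hasCompactSupport (dbar_compact hFc)).sub hi2
  simp_rw [hd] at h0
  rw [integral_add hi1 hi2, ← hypMu_integral_supp] at h0
  · linear_combination h0
  · intro z hz
    apply image_eq_zero_of_notMem_tsupport
    intro h
    linarith [hlt z h]

instance : SFinite hypMu := by unfold hypMu; infer_instance

lemma key_P4 {g : ℂ → ℂ} (hg : ContDiff ℝ 1 g) {r : ℝ} (hr : r < 1)
    (hgs : tsupport g ⊆ closedBall 0 r) {E : Set ℂ} (hEm : MeasurableSet E)
    (hE : E ⊆ closedBall 0 r) (hgE : ∀ z, z ∉ E → g z = 0) :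
    Real.pi * (1 + hypMu.real E) * ‖∫ z, g z ∂hypMu‖
      ≤ Real.sqrt (hypMu.real E + hypMu.real E ^ 2) *
        ∫ ζ, ‖dbar g ζ‖ * (1 - ‖ζ‖^2)⁻¹ := by
  have hc : HasCompactSupport g :=
    (isCompact_closedBall (0:ℂ) r).of_isClosed_subset (isClosed_tsupport g) hgs
  have hlt : ∀ z ∈ tsupport g, ‖z‖ < 1 := fun z hz => by
    have : ‖z‖ ≤ r := by simpa using hgs hz
    linarith
  have hfin : hypMu E < ⊤ := hypMu_compact hr hE
  have : IsFiniteMeasure (hypMu.restrict E) := ⟨by simpa using hfin⟩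
  set A := hypMu.real E with hA
  set S := Real.sqrt (A + A^2)
  have hdc := dbar_continuous hg
  have hdcs := dbar_compact hc
  obtain ⟨M, hM⟩ := hdcs.exists_bound_of_continuous hdc
  -- integrability of the two parts
  have hphi : Continuous (fun ζ => dbar g ζ * phiD ζ) := by
    rw [continuous_iff_continuousAt]
    intro z
    by_cases hz : z ∈ tsupport g
    · exact hdc.continuousAt.mul (phiD_contDiffAt (hlt z hz)).continuousAt
    · have : (fun ζ => dbar g ζ * phiD ζ) =ᶠ[nhds z] fun _ => 0 := by
        have : ∀ᶠ w in nhds z, w ∉ tsupport g := (isClosed_tsupport g).isOpen_compl.mem_nhds hz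
        filter_upwards [this] with w hw
        rw [dbar_support hw, zero_mul]
      exact continuousAt_const.congr this.symm
  have hphii : Integrable (fun ζ => dbar g ζ * phiD ζ) :=
    hphi.integrable_of_hasCompactSupport hdcs.mul_right
  have I2 : Integrable (fun p : ℂ × ℂ => dbar g p.1 * phiD p.1)
      ((volume : Measure ℂ).prod (hypMu.restrict E)) := hphii.comp_fst _
  have I1 : Integrable (fun p : ℂ × ℂ => dbar g p.1 * (p.1 - p.2)⁻¹)
      ((volume : Measure ℂ).prod (hypMu.restrict E)) := by
    have hconv := Integrable.convolution_integrand (ContinuousLinearMap.mul ℝ ℝ)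
      (ν := hypMu.restrict E) (μ := (volume : Measure ℂ)) (f := fun _ => (1:ℝ)) (g := hK)
      (integrable_const _) hK_integrable
    have := (hconv.const_mul M)
    refine this.mono' ?_ ?_
    · apply Measurable.aestronglyMeasurable
      have := hdc.measurable
      fun_prop
    · have hae : ∀ᵐ p ∂((volume : Measure ℂ).prod (hypMu.restrict E)), p.2 ∈ E :=
        Measure.quasiMeasurePreserving_snd.ae (ae_restrict_mem hEm)
      filter_upwards [hae] with p hp
      have hp : ‖p.2‖ ≤ r := by simpa using hE hp
      have hM0 : 0 ≤ M := (norm_nonneg _).trans (hM 0)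
      simp only [ContinuousLinearMap.mul_apply', one_mul]
      by_cases hz : p.1 ∈ tsupport g
      · rw [norm_mul]
        exact mul_le_mul (hM _) (norm_inv_le_hK (hlt _ hz) (hp.trans_lt hr)) (norm_nonneg _) hM0
      · rw [dbar_support hz, zero_mul, norm_zero]
        exact mul_nonneg hM0 (hK_nonneg _)
  have Isum := I1.add I2
  have swap := integral_integral_swap
    (f := fun ζ z => dbar g ζ * (ζ - z)⁻¹ + dbar g ζ * phiD ζ) Isum
  have rhs : ∫ z in E, (∫ ζ, (dbar g ζ * (ζ - z)⁻¹ + dbar g ζ * phiD ζ)) ∂hypMu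
      = -((Real.pi : ℂ) * (1 + A) * ∫ z, g z ∂hypMu) := by
    have hin : ∀ᵐ z ∂(hypMu.restrict E),
        ∫ ζ, (dbar g ζ * (ζ - z)⁻¹ + dbar g ζ * phiD ζ)
          = -(Real.pi : ℂ) * g z + -((Real.pi : ℂ) * ∫ z, g z ∂hypMu) := by
      filter_upwards [I1.prod_left_ae] with z hz
      rw [integral_add hz hphii, dbar_phi_integral hg hr hgs]
      congr 1
      rw [← pompeiu hg hc z]
      simp_rw [div_eq_mul_inv]
    rw [integral_congr_ae hin]
    have hgi : Integrable g (hypMu.restrict E) := by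
      obtain ⟨M', hM'⟩ := hc.exists_bound_of_continuous hg.continuous
      exact Integrable.of_bound hg.continuous.aestronglyMeasurable M' (by simp [hM'])
    rw [integral_add (hgi.const_mul _) (integrable_const _), integral_const_mul, integral_const]
    rw [setIntegral_eq_integral_of_forall_compl_eq_zero hgE]
    simp [Measure.real, hA]
    ring
  have lhs : ‖∫ ζ, ∫ z in E, (dbar g ζ * (ζ - z)⁻¹ + dbar g ζ * phiD ζ) ∂hypMu‖
      ≤ ∫ ζ, S * (‖dbar g ζ‖ * (1 - ‖ζ‖^2)⁻¹) := by
    apply norm_integral_le_of_norm_le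
    · apply Integrable.const_mul
      have hcont : Continuous (fun ζ => ‖dbar g ζ‖ * (1 - ‖ζ‖^2)⁻¹) := by
        rw [continuous_iff_continuousAt]
        intro z
        by_cases hz : z ∈ tsupport g
        · refine hdc.norm.continuousAt.mul (ContinuousAt.inv₀ (by fun_prop) ?_)
          have := hlt z hz
          have := norm_nonneg z
          nlinarith
        · have : (fun ζ => ‖dbar g ζ‖ * (1 - ‖ζ‖^2)⁻¹) =ᶠ[nhds z] fun _ => 0 := by
            have : ∀ᶠ w in nhds z, w ∉ tsupport g := (isClosed_tsupport g).isOpen_compl.mem_nhds hz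
            filter_upwards [this] with w hw
            rw [dbar_support hw, norm_zero, zero_mul]
          exact continuousAt_const.congr this.symm
      exact hcont.integrable_of_hasCompactSupport hdcs.norm.mul_right
    · filter_upwards with ζ
      by_cases hζ : ζ ∈ tsupport g
      · have hζ1 := hlt ζ hζ
        have hn : 0 < 1 - ‖ζ‖^2 := by have := norm_nonneg ζ; nlinarith
        have hnz := one_sub_ne hζ1
        have heq : ∫ z in E, (dbar g ζ * (ζ - z)⁻¹ + dbar g ζ * phiD ζ) ∂hypMu
            = dbar g ζ * (((1 - ‖ζ‖^2 : ℝ)⁻¹ : ℝ) : ℂ) *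
              ∫ z in E, (1 - (starRingEnd ℂ) ζ * z) / (ζ - z) ∂hypMu := by
          rw [← integral_const_mul]
          apply integral_congr_ae
          have : ∀ᵐ z ∂(hypMu.restrict E), z ≠ ζ := by
            have h1 : ∀ᵐ z ∂(ENNReal.ofReal (Real.pi⁻¹ * ((1 - r ^ 2) ^ 2)⁻¹) • (volume : Measure ℂ)), z ≠ ζ := by
              apply Measure.ae_smul_measure
              exact Measure.ae_ne volume ζ
            exact ae_mono (hypMu_restrict_le hr hE) h1
          filter_upwards [this] with z hz
          have : ζ - z ≠ 0 := sub_ne_zero.2 hz.symm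
          rw [Complex.ofReal_inv, ← one_sub_mul_conj, phiD]
          field_simp
          ring
        rw [heq, norm_mul, norm_mul, Complex.norm_real, Real.norm_of_nonneg (by positivity)]
        have hb := bath hζ1 hfin.ne (kernel_int2 hζ1 hr hEm hE)
        rw [mul_comm S]
        gcongr
      · rw [dbar_support hζ]; simp
  rw [swap, rhs, norm_neg, norm_mul, norm_mul, integral_const_mul] at lhs
  have e1 : ‖(1 + A : ℂ)‖ = 1 + A := by
    have : (1 + A : ℂ) = ((1 + A : ℝ) : ℂ) := by push_cast; ring
    rw [this, Complex.norm_real, Real.norm_of_nonneg]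
    have : 0 ≤ A := measureReal_nonneg
    linarith
  rw [e1, Complex.norm_real, Real.norm_of_nonneg Real.pi_pos.le] at lhs
  exact lhs

lemma submean : ∃ C : ℝ, 0 ≤ C ∧ ∀ Ψ : ℂ → ℂ, DifferentiableOn ℂ Ψ (ball 0 2) →
    ‖Ψ 0‖^2 ≤ C * ∫ w in closedBall (0:ℂ) 1, ‖Ψ w‖^2 := by
  let η : ContDiffBump (0:ℂ) := ⟨1/2, 1, by norm_num, by norm_num⟩
  let e : ℂ → ℂ := fun w => (η w : ℂ)
  have he : ContDiff ℝ 1 e := Complex.ofRealCLM.contDiff.comp η.contDiff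
  have hts : tsupport e = closedBall 0 1 := by
    rw [← show tsupport (η : ℂ → ℝ) = closedBall 0 1 from η.tsupport_eq]
    unfold tsupport
    congr 1
    ext w
    simp [e]
  have hec : HasCompactSupport e := by
    rw [HasCompactSupport, hts]; exact isCompact_closedBall _ _
  obtain ⟨M, hM⟩ := (dbar_compact hec).exists_bound_of_continuous (dbar_continuous he)
  have hM0 : 0 ≤ M := (norm_nonneg _).trans (hM 0)
  refine ⟨Real.pi⁻¹ * (M * 2), by have := Real.pi_pos; positivity, fun Ψ hΨ => ?_⟩
  have hΨa : ∀ w : ℂ, ‖w‖ < 2 → DifferentiableAt ℂ (fun w => Ψ w ^ 2) w := fun w hw =>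
    ((hΨ.differentiableAt (isOpen_ball.mem_nhds (by simpa using hw))).pow 2)
  have hΨc : ∀ w : ℂ, ‖w‖ < 2 → ContDiffAt ℝ 1 (fun w => Ψ w ^ 2) w := fun w hw => by
    have : AnalyticAt ℂ Ψ w := hΨ.analyticAt (isOpen_ball.mem_nhds (by simpa using hw))
    exact (this.pow 2).contDiffAt.restrict_scalars ℝ
  let g : ℂ → ℂ := fun w => e w * Ψ w ^ 2
  have hgt : tsupport g ⊆ tsupport e := closure_mono (by
    intro z hz h0
    exact hz (by simp [g, h0]))
  have hlt : ∀ w ∈ tsupport e, ‖w‖ < 2 := fun w hw => by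
    rw [hts] at hw
    have : ‖w‖ ≤ 1 := by simpa using hw
    linarith
  have hg : ContDiff ℝ 1 g := contDiff_of_tsup (fun z hz =>
    he.contDiffAt.mul (hΨc z (hlt z (hgt hz))))
  have hgc : HasCompactSupport g := hec.mono' (subset_closure.trans hgt)
  have hp := pompeiu hg hgc 0
  have hg0 : g 0 = Ψ 0 ^ 2 := by
    have : η 0 = 1 := η.one_of_mem_closedBall (by simp [η])
    simp [g, e, this]
  have hd : ∀ w, ‖dbar g w / (w - 0)‖ ≤ (closedBall (0:ℂ) 1).indicator (fun w => M * 2 * ‖Ψ w‖^2) w := by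
    intro w
    by_cases hw : w ∈ tsupport e
    · rw [Set.indicator_of_mem (hts ▸ hw)]
      have h1 : dbar g w = dbar e w * Ψ w ^ 2 := by
        rw [dbar_mul (he.differentiable (by norm_num) w)
          ((hΨc w (hlt w hw)).differentiableAt (by norm_num)), dbar_holo (hΨa w (hlt w hw))]
        ring
      rw [h1, sub_zero, norm_div, norm_mul, norm_pow]
      by_cases hw2 : ‖w‖ < 1/2
      · have : dbar e w = 0 := by
          have : e =ᶠ[nhds w] fun _ => 1 := by
            filter_upwards [isOpen_ball.mem_nhds (by simpa using hw2 : w ∈ ball (0:ℂ) (1/2))] with u hu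
            have : η u = 1 := η.one_of_mem_closedBall (ball_subset_closedBall hu)
            simp [e, this]
          simp [dbar, this.fderiv_eq]
        rw [this]; simp; positivity
      · have hw0 : 0 < ‖w‖ := by linarith
        rw [div_le_iff₀ hw0]
        have h3 : ‖dbar e w‖ ≤ M * 2 * ‖w‖ := by nlinarith [hM w]
        have := sq_nonneg ‖Ψ w‖
        nlinarith
    · rw [dbar_support (fun h => hw (hgt h))]
      simp only [zero_div, norm_zero]
      exact Set.indicator_nonneg (fun _ _ => by positivity) _
  have hint : Integrable ((closedBall (0:ℂ) 1).indicator (fun w => M * 2 * ‖Ψ w‖^2)) := by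
    rw [integrable_indicator_iff isClosed_closedBall.measurableSet]
    apply ContinuousOn.integrableOn_compact (isCompact_closedBall _ _)
    have : ContinuousOn Ψ (closedBall 0 1) :=
      hΨ.continuousOn.mono (closedBall_subset_ball (by norm_num))
    fun_prop
  have := norm_integral_le_of_norm_le hint (Filter.Eventually.of_forall hd)
  rw [hp, hg0, integral_indicator isClosed_closedBall.measurableSet, integral_const_mul, norm_mul,
    norm_neg, Complex.norm_real, Real.norm_of_nonneg Real.pi_pos.le, norm_pow] at this
  have hpi := Real.pi_pos
  rw [mul_assoc, inv_mul_eq_div, le_div_iff₀ hpi]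
  linarith

lemma submean2 : ∃ C : ℝ, 0 ≤ C ∧ ∀ Φ : ℂ → ℂ, DifferentiableOn ℂ Φ (ball 0 1) →
    ∀ z : ℂ, ‖z‖ < 1 → ∀ δ : ℝ, δ = (1 - ‖z‖)/2 →
    ‖Φ z‖^2 ≤ C * (δ^2)⁻¹ * ∫ w in closedBall z δ, ‖Φ w‖^2 := by
  obtain ⟨C, hC, h⟩ := submean
  refine ⟨C, hC, fun Φ hΦ z hz δ hδ => ?_⟩
  have hδ0 : 0 < δ := by linarith
  have h1 := h (fun w => Φ (z + δ • w)) (by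
    refine hΦ.comp (by fun_prop) ?_
    intro w hw
    have hw : ‖w‖ < 2 := by simpa using hw
    have := norm_add_le z (δ • w)
    rw [norm_smul, Real.norm_of_nonneg hδ0.le] at this
    simp only [mem_ball_zero_iff]
    nlinarith)
  simp only [smul_zero, add_zero] at h1
  refine h1.trans (le_of_eq ?_)
  rw [mul_assoc]
  congr 1
  rw [← integral_indicator isClosed_closedBall.measurableSet,
    ← integral_indicator isClosed_closedBall.measurableSet]
  let F := (closedBall z δ).indicator fun w => ‖Φ w‖^2
  have e1 : ((closedBall (0:ℂ) 1).indicator fun w => ‖Φ (z + δ • w)‖^2)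
      = fun w => (fun u => F (z + u)) (δ • w) := by
    ext w
    have : w ∈ closedBall (0:ℂ) 1 ↔ z + δ • w ∈ closedBall z δ := by
      rw [mem_closedBall_iff_norm, mem_closedBall_iff_norm, add_sub_cancel_left, norm_smul,
        Real.norm_of_nonneg hδ0.le, sub_zero]
      constructor
      · intro h; nlinarith
      · intro h; by_contra h2; nlinarith
    by_cases hw : w ∈ closedBall (0:ℂ) 1
    · simp only [F]
      rw [Set.indicator_of_mem hw, Set.indicator_of_mem (this.1 hw)]
    · simp only [F]
      rw [Set.indicator_of_notMem hw, Set.indicator_of_notMem (fun h => hw (this.2 h))]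
  rw [e1, Measure.integral_comp_smul volume (fun u => F (z + u)) δ, integral_add_left_eq_self]
  simp only [Complex.finrank_real_complex, smul_eq_mul, F]
  rw [abs_of_nonneg (by positivity)]

lemma tail_zero {G : ℂ → ℝ} (hG : Integrable G hypMu) {ε : ℝ} (hε : 0 < ε) :
    ∃ r < 1, 0 ≤ r ∧ ∫ z in {z : ℂ | r ≤ ‖z‖}, G z ∂hypMu < ε := by
  let s : ℕ → Set ℂ := fun n => {z | 1 - 1/((n:ℝ)+1) ≤ ‖z‖}
  have hs : ∀ n, MeasurableSet (s n) := fun n => measurableSet_le measurable_const measurable_norm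
  have hanti : Antitone s := by
    intro n m hnm z hz
    simp only [s, Set.mem_ofPred_eq] at *
    have := Nat.one_div_le_one_div (α := ℝ) hnm
    linarith
  have := tendsto_setIntegral_of_antitone hs hanti ⟨0, hG.integrableOn⟩
  have h0 : ∫ z in ⋂ n, s n, G z ∂hypMu = 0 := by
    have : hypMu (⋂ n, s n) = 0 := by
      have hsub : (⋂ n, s n) ⊆ (ball (0:ℂ) 1)ᶜ := by
        intro z hz
        rw [Set.mem_iInter] at hz
        simp only [Set.mem_compl_iff, mem_ball_zero_iff, not_lt]
        have ht := (tendsto_one_div_add_atTop_nhds_zero_nat (𝕜 := ℝ)).const_sub 1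
        rw [sub_zero] at ht
        exact le_of_tendsto' ht hz
      refine measure_mono_null hsub ?_
      have : (volume.restrict (ball (0:ℂ) 1)) (ball (0:ℂ) 1)ᶜ = 0 := by
        rw [Measure.restrict_apply measurableSet_ball.compl]; simp
      exact withDensity_absolutelyContinuous _ _ this
    rw [Measure.restrict_eq_zero.2 this]; simp
  rw [h0] at this
  obtain ⟨n, hn⟩ := (this.eventually (gt_mem_nhds hε)).exists
  refine ⟨1 - 1/((n:ℝ)+1), ?_, ?_, hn⟩
  · have : 0 < 1/((n:ℝ)+1) := by positivity
    linarith
  · have : 1/((n:ℝ)+1) ≤ 1 := by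
      rw [div_le_one (by positivity)]; linarith [Nat.cast_nonneg (α := ℝ) n]
    linarith

lemma hypMu_setIntegral {G : ℂ → ℝ} {B : Set ℂ} (hB : MeasurableSet B) (hB1 : B ⊆ ball 0 1) :
    ∫ z in B, G z ∂hypMu = ∫ z in B, (Real.pi⁻¹ * ((1 - ‖z‖ ^ 2) ^ 2)⁻¹) * G z := by
  unfold hypMu
  rw [restrict_withDensity hB, Measure.restrict_restrict hB, Set.inter_eq_left.2 hB1,
    integral_withDensity_eq_integral_toReal_smul hypMu_dens_meas (by simp)]
  congr 1
  ext z
  rw [ENNReal.toReal_ofReal (by have := Real.pi_pos; positivity)]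
  simp

lemma hypMu_integrableOn {G : ℂ → ℝ} {B : Set ℂ} (hB : MeasurableSet B) (hB1 : B ⊆ ball 0 1)
    (hG : Integrable G hypMu) :
    IntegrableOn (fun z => (Real.pi⁻¹ * ((1 - ‖z‖ ^ 2) ^ 2)⁻¹) * G z) B := by
  have := hG.integrableOn (s := B)
  unfold hypMu at this
  rw [IntegrableOn, restrict_withDensity hB, Measure.restrict_restrict hB, Set.inter_eq_left.2 hB1,
    integrable_withDensity_iff_integrable_smul' hypMu_dens_meas (by simp)] at this
  refine this.congr (Filter.Eventually.of_forall fun z => ?_)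
  simp only
  rw [ENNReal.toReal_ofReal (by have := Real.pi_pos; positivity)]
  simp

lemma decay {k : ℝ} (hk : 0 < k) {Φ f : ℂ → ℂ} (hΦ : DifferentiableOn ℂ Φ (ball 0 1))
    (hf : ∀ ζ, f ζ = (((1 - ‖ζ‖ ^ 2) ^ k : ℝ) : ℂ) * Φ ζ)
    (hL2 : Integrable (fun ζ => ‖f ζ‖ ^ 2) hypMu) {t : ℝ} (ht : 0 < t) :
    ∃ r < 1, ∀ z : ℂ, ‖z‖ < 1 → t ≤ ‖f z‖ → ‖z‖ ≤ r := by
  obtain ⟨C, hC, hsub⟩ := submean2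
  have hpi := Real.pi_pos
  set K := (4:ℝ)^k * 4^k * C * 36 * Real.pi + 1 with hK
  have hK0 : 0 < K := by positivity
  obtain ⟨r, hr1, hr0, hr⟩ := tail_zero hL2 (ε := t^2 / K) (by positivity)
  refine ⟨(1 + 2 * r)/3, by linarith, fun z hz htz => ?_⟩
  by_contra hcon
  push Not at hcon
  set δ := (1 - ‖z‖)/2 with hδ
  have hδ0 : 0 < δ := by rw [hδ]; linarith
  have h1 := hsub Φ hΦ z hz δ hδ
  have hB : ∀ ζ ∈ closedBall z δ, ‖ζ‖ ≤ ‖z‖ + δ ∧ ‖z‖ - δ ≤ ‖ζ‖ := by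
    intro ζ hζ
    have hζ : ‖ζ - z‖ ≤ δ := by simpa [dist_eq_norm] using hζ
    have a := norm_sub_norm_le ζ z
    have b := norm_sub_norm_le z ζ
    rw [norm_sub_rev] at b
    constructor <;> linarith
  have hB1 : closedBall z δ ⊆ ball 0 1 := by
    intro ζ hζ
    have := (hB ζ hζ).1
    rw [mem_ball_zero_iff]
    linarith
  have hmB : MeasurableSet (closedBall z δ) := isClosed_closedBall.measurableSet
  set dk := δ^k with hdk
  have hdk0 : 0 < dk := Real.rpow_pos_of_pos hδ0 k
  have hpt : ∀ ζ ∈ closedBall z δ, ‖Φ ζ‖^2 ≤ (36 * Real.pi * δ^2 / dk^2) *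
      ((Real.pi⁻¹ * ((1 - ‖ζ‖ ^ 2) ^ 2)⁻¹) * ‖f ζ‖^2) := by
    intro ζ hζ
    obtain ⟨b1, b2⟩ := hB ζ hζ
    have hn := norm_nonneg ζ
    have c1 : δ ≤ 1 - ‖ζ‖^2 := by nlinarith
    have c2 : 1 - ‖ζ‖^2 ≤ 6 * δ := by nlinarith
    have c0 : 0 < 1 - ‖ζ‖^2 := by linarith
    have c3 : dk ≤ (1 - ‖ζ‖^2)^k := Real.rpow_le_rpow hδ0.le c1 hk.le
    have hnf : ‖f ζ‖ = (1 - ‖ζ‖^2)^k * ‖Φ ζ‖ := by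
      rw [hf, norm_mul, Complex.norm_real, Real.norm_of_nonneg (Real.rpow_nonneg c0.le _)]
    rw [hnf]
    set X := 1 - ‖ζ‖^2
    set Y := X^k
    have hd : 36 * Real.pi * δ^2 / dk^2 * (Real.pi⁻¹ * (X^2)⁻¹ * (Y * ‖Φ ζ‖)^2)
        = ((6*δ)^2 / X^2) * (Y^2/dk^2) * ‖Φ ζ‖^2 := by
      field_simp
      ring
    rw [hd]
    have e1 : 1 ≤ (6*δ)^2 / X^2 := by
      rw [one_le_div (by positivity)]; gcongr
    have e2 : 1 ≤ Y^2/dk^2 := by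
      rw [one_le_div (by positivity)]; gcongr
    have := mul_le_mul e1 e2 (by norm_num) (by positivity)
    nlinarith [sq_nonneg ‖Φ ζ‖]
  have h2 : ∫ ζ in closedBall z δ, ‖Φ ζ‖^2 ≤ (36 * Real.pi * δ^2 / dk^2) *
      ∫ ζ in closedBall z δ, ‖f ζ‖^2 ∂hypMu := by
    rw [hypMu_setIntegral hmB hB1, ← integral_const_mul]
    apply setIntegral_mono_on _ ((hypMu_integrableOn hmB hB1 hL2).const_mul _) hmB hpt
    apply ContinuousOn.integrableOn_compact (isCompact_closedBall _ _)
    have : ContinuousOn Φ (closedBall z δ) := hΦ.continuousOn.mono hB1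
    fun_prop
  have h3 : ∫ ζ in closedBall z δ, ‖f ζ‖^2 ∂hypMu ≤ ∫ ζ in {z : ℂ | r ≤ ‖z‖}, ‖f ζ‖^2 ∂hypMu := by
    apply setIntegral_mono_set hL2.integrableOn (Filter.Eventually.of_forall fun _ => by positivity)
    apply LE.le.eventuallyLE
    intro ζ hζ
    have := (hB ζ hζ).2
    simp only [Set.mem_ofPred_eq]
    linarith
  have hn := norm_nonneg z
  have c0 : 0 ≤ 1 - ‖z‖^2 := by nlinarith
  have c1 : 1 - ‖z‖^2 ≤ 4 * δ := by nlinarith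
  have hnf : ‖f z‖ = (1 - ‖z‖^2)^k * ‖Φ z‖ := by
    rw [hf, norm_mul, Complex.norm_real, Real.norm_of_nonneg (Real.rpow_nonneg c0 _)]
  have h4 : ‖f z‖ ≤ 4^k * dk * ‖Φ z‖ := by
    rw [hnf, hdk, ← Real.mul_rpow (by norm_num) hδ0.le]
    gcongr
  set I := ∫ ζ in {z : ℂ | r ≤ ‖z‖}, ‖f ζ‖^2 ∂hypMu with hI
  have hI0 : 0 ≤ I := integral_nonneg (fun _ => by positivity)
  have h5 : t^2 ≤ (4^k * dk)^2 * (C * (δ^2)⁻¹ * (36 * Real.pi * δ^2 / dk^2 * I)) := by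
    calc t^2 ≤ ‖f z‖^2 := by gcongr
      _ ≤ (4^k * dk * ‖Φ z‖)^2 := by gcongr
      _ = (4^k * dk)^2 * ‖Φ z‖^2 := by ring
      _ ≤ (4^k * dk)^2 * (C * (δ^2)⁻¹ * ∫ w in closedBall z δ, ‖Φ w‖^2) := by gcongr
      _ ≤ (4^k * dk)^2 * (C * (δ^2)⁻¹ * (36 * Real.pi * δ^2 / dk^2 * I)) := by
          gcongr
          refine h2.trans ?_
          gcongr
  have h6 : (4^k * dk)^2 * (C * (δ^2)⁻¹ * (36 * Real.pi * δ^2 / dk^2 * I)) = (K - 1) * I := by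
    rw [hK]; field_simp; ring
  rw [h6] at h5
  rw [lt_div_iff₀ hK0] at hr
  nlinarith

lemma dbar_ofReal_comp {u : ℂ → ℝ} {h : ℝ → ℝ} {h' : ℝ} {z : ℂ} (hu : DifferentiableAt ℝ u z)
    (hh : HasDerivAt h h' (u z)) :
    dbar (fun w => ((h (u w) : ℝ) : ℂ)) z = h' * dbar (fun w => ((u w : ℝ) : ℂ)) z := by
  have h1 : HasFDerivAt (fun w => ((u w : ℝ) : ℂ)) (Complex.ofRealCLM.comp (fderiv ℝ u z)) z :=
    Complex.ofRealCLM.hasFDerivAt.comp z hu.hasFDerivAt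
  have h2 : HasFDerivAt (fun w => ((h (u w) : ℝ) : ℂ))
      (Complex.ofRealCLM.comp (h' • fderiv ℝ u z)) z :=
    Complex.ofRealCLM.hasFDerivAt.comp z (hh.comp_hasFDerivAt z hu.hasFDerivAt)
  unfold dbar
  rw [h1.fderiv, h2.fderiv]
  simp
  ring

lemma dbar_conj_comp {F : ℂ → ℂ} {z : ℂ} (hF : DifferentiableAt ℂ F z) :
    dbar (fun w => (starRingEnd ℂ) (F w)) z = (starRingEnd ℂ) (deriv F z) := by
  have h := (hF.hasDerivAt.hasFDerivAt.restrictScalars ℝ)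
  have h2 : HasFDerivAt (fun w => (starRingEnd ℂ) (F w)) _ z :=
    Complex.conjCLE.hasFDerivAt.comp z h
  unfold dbar
  rw [h2.fderiv]
  simp
  rw [← mul_assoc, Complex.I_mul_I]; ring

/-- The squared modulus of the transform. -/
noncomputable def Sf (k : ℝ) (Φ : ℂ → ℂ) (z : ℂ) : ℝ :=
  (1 - ‖z‖^2)^(2*k) * Complex.normSq (Φ z)

/-- The holomorphic gradient of `log Sf`. -/
noncomputable def Wf (k : ℝ) (Φ : ℂ → ℂ) (z : ℂ) : ℂ :=
  deriv Φ z * (Φ z)⁻¹ - 2 * k * phiD z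

lemma one_sub_pos {z : ℂ} (hz : ‖z‖ < 1) : 0 < 1 - ‖z‖^2 := by
  have := norm_nonneg z; nlinarith

lemma dbar_rho (z : ℂ) : dbar (fun w : ℂ => ((1 - ‖w‖^2 : ℝ) : ℂ)) z = - z := by
  have hc : DifferentiableAt ℝ (fun w : ℂ => (starRingEnd ℂ) w) z :=
    contDiff_conj.contDiffAt.differentiableAt (by norm_num)
  have hm : DifferentiableAt ℝ (fun w : ℂ => w * (starRingEnd ℂ) w) z :=
    differentiableAt_id.mul hc
  simp_rw [← one_sub_mul_conj]
  have := dbar_mul (differentiableAt_fun_id (𝕜 := ℝ) (x := z)) hc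
  rw [dbar_sub (differentiableAt_const 1) hm, this, dbar_conj, dbar_holo differentiableAt_fun_id,
    dbar_holo (differentiableAt_const 1)]
  ring

lemma contDiff_rho : ContDiff ℝ 1 (fun w : ℂ => 1 - ‖w‖^2) :=
  contDiff_const.sub (contDiff_norm_sq ℝ)

lemma phi_an {Φ : ℂ → ℂ} (hΦ : DifferentiableOn ℂ Φ (ball 0 1)) {z : ℂ} (hz : ‖z‖ < 1) : AnalyticAt ℂ Φ z :=
  hΦ.analyticAt (isOpen_ball.mem_nhds (by simpa using hz))

lemma Sf_contDiffAt {k : ℝ} {Φ : ℂ → ℂ} (hΦ : DifferentiableOn ℂ Φ (ball 0 1)) {z : ℂ}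
    (hz : ‖z‖ < 1) : ContDiffAt ℝ 1 (Sf k Φ) z := by
  have h1 : ContDiffAt ℝ 1 Φ z := (phi_an hΦ hz).contDiffAt.restrict_scalars ℝ
  have h2 : ContDiffAt ℝ 1 (fun w => Complex.normSq (Φ w)) z := by
    simp_rw [Complex.normSq_eq_norm_sq]
    exact h1.norm_sq ℝ
  exact (contDiff_rho.contDiffAt.rpow_const_of_ne (one_sub_pos hz).ne').mul h2

lemma Wf_contDiffAt {k : ℝ} {Φ : ℂ → ℂ} (hΦ : DifferentiableOn ℂ Φ (ball 0 1)) {z : ℂ}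
    (hz : ‖z‖ < 1) (h0 : Φ z ≠ 0) : ContDiffAt ℝ 1 (Wf k Φ) z := by
  have h1 := phi_an hΦ hz
  have h2 : ContDiffAt ℝ 1 (fun w => deriv Φ w * (Φ w)⁻¹) z :=
    (h1.deriv.mul (h1.inv h0)).contDiffAt.restrict_scalars ℝ
  exact h2.sub (contDiffAt_const.mul (phiD_contDiffAt hz))

lemma dbar_Wf {k : ℝ} {Φ : ℂ → ℂ} (hΦ : DifferentiableOn ℂ Φ (ball 0 1)) {z : ℂ}
    (hz : ‖z‖ < 1) (h0 : Φ z ≠ 0) :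
    dbar (Wf k Φ) z = - (2 * k) * ((((1 - ‖z‖^2)^2)⁻¹ : ℝ) : ℂ) := by
  have h1 := phi_an hΦ hz
  have h2 : DifferentiableAt ℂ (fun w => deriv Φ w * (Φ w)⁻¹) z :=
    (h1.deriv.mul (h1.inv h0)).differentiableAt
  have h3 : DifferentiableAt ℝ phiD z := (phiD_contDiffAt hz).differentiableAt (by norm_num)
  have h4 : DifferentiableAt ℝ (fun w => 2 * (k:ℂ) * phiD w) z := h3.const_mul _
  unfold Wf
  rw [dbar_sub (h2.restrictScalars ℝ) h4, dbar_holo h2, dbar_const_mul _ h3, dbar_phiD hz]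
  ring

lemma dbar_Sf {k : ℝ} {Φ : ℂ → ℂ} (hΦ : DifferentiableOn ℂ Φ (ball 0 1)) {z : ℂ}
    (hz : ‖z‖ < 1) (h0 : Φ z ≠ 0) :
    dbar (fun w => ((Sf k Φ w : ℝ) : ℂ)) z = Sf k Φ z * (starRingEnd ℂ) (Wf k Φ z) := by
  have h1 := (phi_an hΦ hz).differentiableAt
  have hpos := one_sub_pos hz
  have h1r : DifferentiableAt ℝ Φ z := h1.restrictScalars ℝ
  have h1c : DifferentiableAt ℝ (fun w => (starRingEnd ℂ) (Φ w)) z :=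
    Complex.conjCLE.differentiableAt.comp z h1r
  have hrho : DifferentiableAt ℝ (fun w : ℂ => 1 - ‖w‖^2) z :=
    contDiff_rho.differentiable (by norm_num) z
  have hR : HasDerivAt (fun x : ℝ => x^(2*k)) (2*k*(1-‖z‖^2)^(2*k-1)) (1 - ‖z‖^2) :=
    Real.hasDerivAt_rpow_const (Or.inl hpos.ne')
  have hRr : DifferentiableAt ℝ (fun w : ℂ => (1 - ‖w‖^2)^(2*k)) z :=
    hrho.rpow_const (Or.inl hpos.ne')
  have hRd : DifferentiableAt ℝ (fun w : ℂ => (((1 - ‖w‖^2)^(2*k) : ℝ) : ℂ)) z :=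
    (Complex.ofRealCLM.hasFDerivAt.comp z hRr.hasFDerivAt).differentiableAt
  have e : (fun w => ((Sf k Φ w : ℝ) : ℂ)) =
      fun w => (((1 - ‖w‖^2)^(2*k) : ℝ) : ℂ) * (Φ w * (starRingEnd ℂ) (Φ w)) := by
    ext w
    rw [Complex.mul_conj, Sf]; push_cast; ring
  rw [e, dbar_mul hRd (h1r.fun_mul h1c), dbar_mul h1r h1c, dbar_ofReal_comp hrho hR, dbar_rho,
    dbar_conj_comp h1, dbar_holo h1]
  have hne : (starRingEnd ℂ) (Φ z) ≠ 0 := by simpa using h0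
  have hrp : (1 - ‖z‖^2)^(2*k) = (1 - ‖z‖^2)^(2*k-1) * (1 - ‖z‖^2) := by
    rw [← Real.rpow_add_one hpos.ne']; congr 1; ring
  have hcj : (starRingEnd ℂ) (1 - z * (starRingEnd ℂ) z) = 1 - z * (starRingEnd ℂ) z := by
    simp [mul_comm]
  have h5 : (((1 - ‖z‖^2)^(2*k) : ℝ) : ℂ) = (((1 - ‖z‖^2)^(2*k-1) : ℝ) : ℂ) * (1 - z * (starRingEnd ℂ) z) := by
    rw [hrp, one_sub_mul_conj, Complex.ofReal_mul]
  have h6 := one_sub_ne hz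
  rw [congrFun e z]
  simp only [Wf, phiD, map_sub, map_mul, map_inv₀, hcj, Complex.conj_conj, Complex.conj_ofReal,
    map_ofNat]
  rw [h5]
  push_cast
  field_simp
  ring

lemma int_dens_mul {F : ℂ → ℝ} (hF : Continuous F) {r : ℝ} (hr : r < 1)
    (hs : ∀ z, r < ‖z‖ → F z = 0) :
    Integrable (fun z => ((1 - ‖z‖ ^ 2) ^ 2)⁻¹ * F z) := by
  have h1 : IntegrableOn (fun z => ((1 - ‖z‖ ^ 2) ^ 2)⁻¹ * F z) (closedBall 0 r) := by
    apply ContinuousOn.integrableOn_compact (isCompact_closedBall _ _)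
    refine ContinuousOn.mul (ContinuousOn.inv₀ (by fun_prop) ?_) hF.continuousOn
    intro z hz
    have : ‖z‖ ≤ r := by simpa using hz
    have := one_sub_pos (this.trans_lt hr)
    positivity
  refine h1.integrable_of_forall_notMem_eq_zero ?_
  intro z hz
  rw [hs z (by simpa using hz), mul_zero]

lemma int_hyp {F : ℂ → ℝ} (hF : Continuous F) {r : ℝ} (hr : r < 1)
    (hs : ∀ z, r < ‖z‖ → F z = 0) : Integrable F hypMu := by
  have h1 : IntegrableOn F (closedBall 0 r) hypMu := by
    have : IntegrableOn F (closedBall 0 r) volume :=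
      hF.continuousOn.integrableOn_compact (isCompact_closedBall _ _)
    have h2 := (this.smul_measure (c := ENNReal.ofReal (Real.pi⁻¹ * ((1 - r ^ 2) ^ 2)⁻¹)) (by simp))
    have h3 := hypMu_restrict_le hr (subset_refl (closedBall (0:ℂ) r))
    refine h2.mono_measure ?_
    rw [← Measure.restrict_smul]
    have := Measure.restrict_mono_measure h3 (closedBall (0:ℂ) r)
    rwa [Measure.restrict_restrict isClosed_closedBall.measurableSet, Set.inter_self] at this
  refine h1.integrable_of_forall_notMem_eq_zero ?_
  intro z hz
  rw [hs z (by simpa using hz)]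

lemma hypMu_real_supp {F : ℂ → ℝ} (hF : ∀ z, 1 ≤ ‖z‖ → F z = 0) :
    Real.pi * ∫ z, F z ∂hypMu = ∫ z, ((1 - ‖z‖ ^ 2) ^ 2)⁻¹ * F z := by
  have := hypMu_integral_supp (F := fun z => (F z : ℂ)) (fun z hz => by simp [hF z hz])
  rw [integral_complex_ofReal] at this
  simp_rw [← Complex.ofReal_mul] at this
  rw [integral_complex_ofReal] at this
  exact_mod_cast this

/-- Superlevel sets of `Sf`. -/
def Elev (k : ℝ) (Φ : ℂ → ℂ) (a : ℝ) : Set ℂ := ball 0 1 ∩ {z | a < Sf k Φ z}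

lemma Elev_meas {k : ℝ} {Φ : ℂ → ℂ} (hΦ : DifferentiableOn ℂ Φ (ball 0 1)) (a : ℝ) :
    MeasurableSet (Elev k Φ a) := by
  have h : ContinuousOn (Sf k Φ) (ball 0 1) := fun z hz =>
    (Sf_contDiffAt hΦ (by simpa using hz)).continuousAt.continuousWithinAt
  exact (h.isOpen_inter_preimage isOpen_ball isOpen_Ioi).measurableSet

lemma quad_cs {P Q J : ℝ} (h : ∀ x : ℝ, 2 * x * J ≤ x^2 * P + Q) : J^2 ≤ P * Q := by
  have := discrim_le_zero (a := P) (b := -2*J) (c := Q) (fun x => by nlinarith [h x])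
  unfold discrim at this
  nlinarith

lemma core {k : ℝ} (hk : 0 < k) {Φ : ℂ → ℂ} (hΦ : DifferentiableOn ℂ Φ (ball 0 1))
    (hdec : ∀ t : ℝ, 0 < t → ∃ r < 1, ∀ z : ℂ, ‖z‖ < 1 → t ≤ Sf k Φ z → ‖z‖ ≤ r)
    {a b : ℝ} (ha : 0 < a) (hab : a < b) {d : ℝ → ℝ} (hd : Continuous d) (hd0 : ∀ x, 0 ≤ d x)
    (hds : ∀ x, x ∉ Set.Ioo a b → d x = 0) (hd1 : ∀ x, x * d x ≤ 1) :
    (1 + hypMu.real (Elev k Φ a)) * ((∫ x in a..b, d x) * hypMu.real (Elev k Φ b))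
      ≤ 2 * k * hypMu.real (Elev k Φ a) *
        (hypMu.real (Elev k Φ a) - hypMu.real (Elev k Φ b)) := by
  obtain ⟨r, hr, hdr⟩ := hdec a ha
  let h : ℝ → ℝ := fun s => ∫ x in a..s, d x
  have hh : ∀ s, HasDerivAt h (d s) s := fun s => (hd.integral_hasStrictDerivAt a s).hasDerivAt
  have hhc : ContDiff ℝ 1 h := by
    rw [contDiff_one_iff_deriv]
    refine ⟨fun s => (hh s).differentiableAt, ?_⟩
    have : deriv h = d := by ext s; exact (hh s).deriv
    rw [this]; exact hd
  have hmono : Monotone h := monotone_of_hasDerivAt_nonneg hh hd0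
  have hha : h a = 0 := by simp [h]
  have hh0 : ∀ s, s ≤ a → h s = 0 := by
    intro s hs
    simp only [h]
    rw [intervalIntegral.integral_symm, intervalIntegral.integral_zero_ae, neg_zero]
    refine Filter.Eventually.of_forall fun x hx => ?_
    rw [Set.uIoc_of_le hs] at hx
    exact hds x (fun h => by linarith [h.1, hx.2])
  have hhnn : ∀ s, 0 ≤ h s := by
    intro s
    rcases le_total s a with h1 | h1
    · rw [hh0 s h1]
    · rw [← hha]; exact hmono h1
  set S := Sf k Φ with hS
  set ℓ := ∫ x in a..b, d x with hℓ
  let gr : ℂ → ℝ := fun z => if ‖z‖ < 1 then h (S z) else 0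
  let θ : ℂ → ℝ := fun z => if ‖z‖ < 1 then S z * d (S z) else 0
  let g : ℂ → ℂ := fun z => (gr z : ℂ)
  have hnear : ∀ z : ℂ, ‖z‖ < 1 → ∀ᶠ w in nhds z, ‖w‖ < 1 := fun z hz =>
    continuous_norm.continuousAt.eventually (gt_mem_nhds hz)
  have hgr0 : ∀ z, r < ‖z‖ → gr z = 0 := by
    intro z hz
    by_cases h1 : ‖z‖ < 1
    · simp only [gr, h1, if_true]
      apply hh0
      by_contra h2
      exact absurd (hdr z h1 (not_le.1 h2).le) (not_le.2 hz)
    · simp [gr, h1]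
  have hθ0 : ∀ z, r < ‖z‖ → θ z = 0 := by
    intro z hz
    by_cases h1 : ‖z‖ < 1
    · simp only [θ, h1, if_true]
      rw [hds, mul_zero]
      intro h2
      exact absurd (hdr z h1 h2.1.le) (not_le.2 hz)
    · simp [θ, h1]
  have hgs : tsupport g ⊆ closedBall 0 r := by
    apply closure_minimal _ isClosed_closedBall
    intro z hz
    by_contra h1
    exact hz (by simp only [g]; rw [hgr0 z (by simpa using h1)]; simp)
  have hlt : ∀ z ∈ tsupport g, ‖z‖ < 1 := fun z hz => by
    have : ‖z‖ ≤ r := by simpa using hgs hz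
    linarith
  have hge : ∀ z ∈ tsupport g, a ≤ S z := by
    intro z hz
    by_contra h1
    have c := (Sf_contDiffAt (k := k) hΦ (hlt z hz)).continuousAt
    have : g =ᶠ[nhds z] fun _ => 0 := by
      filter_upwards [hnear z (hlt z hz), c.eventually (gt_mem_nhds (not_le.1 h1))] with w h2 h3
      simp only [g, gr, h2, if_true]
      rw [hh0 _ h3.le]; simp
    exact (notMem_tsupport_iff_eventuallyEq.2 this) hz
  have hΦ0 : ∀ z, a ≤ S z → Φ z ≠ 0 := by
    intro z hz h0
    have : S z = 0 := by simp [hS, Sf, h0]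
    linarith
  have hgloc : ∀ z : ℂ, ‖z‖ < 1 → g =ᶠ[nhds z] fun w => ((h (S w) : ℝ) : ℂ) := by
    intro z hz
    filter_upwards [hnear z hz] with w hw
    simp [g, gr, hw]
  have hg : ContDiff ℝ 1 g := contDiff_of_tsup (fun z hz => by
    have h1 := Sf_contDiffAt (k := k) hΦ (hlt z hz)
    have h2 : ContDiffAt ℝ 1 (fun w => ((h (S w) : ℝ) : ℂ)) z :=
      Complex.ofRealCLM.contDiff.contDiffAt.comp z (hhc.contDiffAt.comp z h1)
    exact h2.congr_of_eventuallyEq (hgloc z (hlt z hz)))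
  have hgc : HasCompactSupport g :=
    (isCompact_closedBall (0:ℂ) r).of_isClosed_subset (isClosed_tsupport g) hgs
  have hgrc : Continuous gr := by
    have := Complex.continuous_re.comp hg.continuous
    exact this
  have hθnn : ∀ z, 0 ≤ θ z := by
    intro z
    by_cases h1 : ‖z‖ < 1
    · simp only [θ, h1, if_true]
      refine mul_nonneg ?_ (hd0 _)
      have := one_sub_pos h1
      exact mul_nonneg (Real.rpow_nonneg this.le _) (Complex.normSq_nonneg _)
    · simp [θ, h1]
  have hθc : Continuous θ := by
    rw [continuous_iff_continuousAt]
    intro z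
    by_cases h1 : ‖z‖ < 1
    · have h2 := (Sf_contDiffAt (k := k) hΦ h1).continuousAt
      have : ContinuousAt (fun w => S w * d (S w)) z := h2.mul (hd.continuousAt.comp h2)
      refine this.congr ?_
      filter_upwards [hnear z h1] with w hw
      simp [θ, hw]
    · have h2 : r < ‖z‖ := by linarith [not_lt.1 h1]
      refine continuousAt_const.congr (f := fun _ => (0:ℝ)) ?_
      filter_upwards [continuous_norm.continuousAt.eventually (lt_mem_nhds h2)] with w hw
      exact (hθ0 w hw).symm
  have hdb : ∀ z, dbar g z = θ z * (starRingEnd ℂ) (Wf k Φ z) := by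
    intro z
    by_cases h1 : ‖z‖ < 1
    · by_cases h2 : Φ z = 0
      · have h3 : S z = 0 := by simp [hS, Sf, h2]
        rw [dbar_support (fun h => by linarith [hge z h])]
        simp [θ, h3]
      · have h3 : dbar g z = dbar (fun w => ((h (S w) : ℝ) : ℂ)) z := by
          unfold dbar; rw [(hgloc z h1).fderiv_eq]
        rw [h3, dbar_ofReal_comp ((Sf_contDiffAt (k := k) hΦ h1).differentiableAt (by norm_num))
          (hh (S z)), dbar_Sf hΦ h1 h2]
        simp only [θ, h1, if_true]
        push_cast; ring
    · rw [dbar_support (fun h => h1 (hlt z h))]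
      simp [θ, h1]
  -- first identity
  let F : ℂ → ℂ := fun z => g z * Wf k Φ z
  have hts : tsupport F ⊆ tsupport g := closure_mono (by
    intro z hz h0
    exact hz (by simp [F, h0]))
  have hF : ContDiff ℝ 1 F := contDiff_of_tsup (fun z hz =>
    hg.contDiffAt.mul (Wf_contDiffAt hΦ (hlt z (hts hz)) (hΦ0 z (hge z (hts hz)))))
  have hFc : HasCompactSupport F := hgc.mono' (subset_closure.trans hts)
  have hdF : ∀ z, dbar F z = ((θ z * ‖Wf k Φ z‖^2 - 2 * k * (((1 - ‖z‖ ^ 2) ^ 2)⁻¹ * gr z) : ℝ) : ℂ) := by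
    intro z
    have e1 : ((θ z * ‖Wf k Φ z‖^2 : ℝ) : ℂ) = dbar g z * Wf k Φ z := by
      rw [hdb, ← Complex.normSq_eq_norm_sq, Complex.ofReal_mul, ← Complex.mul_conj]; ring
    rw [Complex.ofReal_sub, e1]
    by_cases hz : z ∈ tsupport g
    · rw [dbar_mul (hg.differentiable (by norm_num) z)
        ((Wf_contDiffAt hΦ (hlt z hz) (hΦ0 z (hge z hz))).differentiableAt (by norm_num)),
        dbar_Wf hΦ (hlt z hz) (hΦ0 z (hge z hz))]
      simp only [g]
      push_cast
      ring
    · have : g z = 0 := image_eq_zero_of_notMem_tsupport hz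
      have h2 : gr z = 0 := by simpa [g] using this
      rw [dbar_support (fun h => hz (hts h)), dbar_support hz, h2]
      simp
  have hI := int_dens_mul hgrc hr hgr0
  have hFi : Integrable (fun z => θ z * ‖Wf k Φ z‖^2 - 2 * k * (((1 - ‖z‖ ^ 2) ^ 2)⁻¹ * gr z)) := by
    have := (dbar_continuous hF).integrable_of_hasCompactSupport (dbar_compact hFc) (μ := volume)
    have := this.re
    refine this.congr (Filter.Eventually.of_forall fun z => ?_)
    simp only [hdF]
    exact Complex.ofReal_re _
  have hPi : Integrable (fun z => θ z * ‖Wf k Φ z‖^2) := by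
    refine (hFi.add (hI.const_mul (2*k))).congr (Filter.Eventually.of_forall fun z => ?_)
    simp
  have hgr1 : ∀ z, 1 ≤ ‖z‖ → gr z = 0 := fun z hz => hgr0 z (by linarith)
  have hθ1 : ∀ z, 1 ≤ ‖z‖ → θ z = 0 := fun z hz => hθ0 z (by linarith)
  set Gr := ∫ z, gr z ∂hypMu with hGr
  set T := ∫ z, θ z ∂hypMu with hT
  have hP : ∫ z, θ z * ‖Wf k Φ z‖^2 = 2 * k * (Real.pi * Gr) := by
    have h0 := integral_dbar hF hFc
    simp_rw [hdF] at h0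
    rw [integral_complex_ofReal] at h0
    have h0 : ∫ z, (θ z * ‖Wf k Φ z‖^2 - 2 * k * (((1 - ‖z‖ ^ 2) ^ 2)⁻¹ * gr z)) = 0 := by
      exact_mod_cast h0
    rw [integral_sub hPi (hI.const_mul _), integral_const_mul, ← hypMu_real_supp hgr1] at h0
    linarith
  have hQi := int_dens_mul hθc hr hθ0
  have hQ : ∫ z, ((1 - ‖z‖ ^ 2) ^ 2)⁻¹ * θ z = Real.pi * T := (hypMu_real_supp hθ1).symm
  have hnd : ∀ z, ‖dbar g z‖ = θ z * ‖Wf k Φ z‖ := by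
    intro z
    rw [hdb, norm_mul, RCLike.norm_conj, Complex.norm_real, Real.norm_of_nonneg (hθnn z)]
  set J := ∫ z, ‖dbar g z‖ * (1 - ‖z‖^2)⁻¹ with hJ
  have hpt : ∀ (x : ℝ) (z : ℂ), 2 * x * (‖dbar g z‖ * (1 - ‖z‖^2)⁻¹)
      ≤ x^2 * (θ z * ‖Wf k Φ z‖^2) + ((1 - ‖z‖ ^ 2) ^ 2)⁻¹ * θ z := by
    intro x z
    rw [hnd, ← inv_pow]
    have := mul_nonneg (hθnn z) (sq_nonneg (x * ‖Wf k Φ z‖ - (1 - ‖z‖^2)⁻¹))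
    nlinarith
  have hJi : Integrable (fun z => ‖dbar g z‖ * (1 - ‖z‖^2)⁻¹) := by
    refine (hPi.add hQi).mono' ?_ ?_
    · apply Measurable.aestronglyMeasurable
      have := (dbar_continuous hg).measurable
      fun_prop
    · refine Filter.Eventually.of_forall fun z => ?_
      have h1 := hpt 1 z
      have h2 := hpt (-1) z
      rw [Real.norm_eq_abs, abs_le]
      have h3 : 0 ≤ θ z * ‖Wf k Φ z‖^2 := mul_nonneg (hθnn z) (sq_nonneg _)
      have h4 : 0 ≤ ((1 - ‖z‖ ^ 2) ^ 2)⁻¹ * θ z := mul_nonneg (by positivity) (hθnn z)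
      simp only [Pi.add_apply]
      constructor <;> linarith
  have hCS : J^2 ≤ (2 * k * (Real.pi * Gr)) * (Real.pi * T) := by
    apply quad_cs
    intro x
    rw [← hP, ← hQ, hJ, ← integral_const_mul, ← integral_const_mul, ← integral_add (hPi.const_mul _) hQi]
    exact integral_mono (hJi.const_mul _) ((hPi.const_mul _).add hQi) (hpt x)
  -- apply the key lemma
  have hEsub : Elev k Φ a ⊆ closedBall 0 r := by
    rintro z ⟨h1, h2⟩
    have := hdr z (by simpa using h1) (le_of_lt h2)
    simpa using this
  have hEbsub : Elev k Φ b ⊆ Elev k Φ a := fun z hz => ⟨hz.1, lt_trans hab hz.2⟩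
  have hfa : hypMu (Elev k Φ a) < ⊤ := hypMu_compact hr hEsub
  have hfb : hypMu (Elev k Φ b) < ⊤ := (measure_mono hEbsub).trans_lt hfa
  have hkey := key_P4 hg hr hgs (Elev_meas hΦ a) hEsub (by
    intro z hz
    simp only [g]
    by_cases h1 : ‖z‖ < 1
    · have : S z ≤ a := by
        by_contra h2
        exact hz ⟨by simpa using h1, not_le.1 h2⟩
      simp [gr, h1, hh0 _ this]
    · simp [gr, h1])
  set A := hypMu.real (Elev k Φ a) with hA
  set B := hypMu.real (Elev k Φ b) with hB
  have hA0 : 0 ≤ A := measureReal_nonneg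
  have hGr0 : 0 ≤ Gr := integral_nonneg (fun z => by
    by_cases h1 : ‖z‖ < 1
    · simp [gr, h1, hhnn]
    · simp [gr, h1])
  have hT0 : 0 ≤ T := integral_nonneg hθnn
  have hGeq : ‖∫ z, g z ∂hypMu‖ = Gr := by
    simp only [g]
    rw [integral_complex_ofReal, Complex.norm_real, Real.norm_of_nonneg hGr0]
  rw [hGeq, ← hJ] at hkey
  have hpi := Real.pi_pos
  have hmain : (1 + A) * Gr ≤ 2 * k * A * T := by
    rcases hGr0.eq_or_lt with h0 | h0
    · rw [← h0]; simp; positivity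
    · have h1 : (Real.pi * (1 + A) * Gr)^2 ≤ (A + A^2) * J^2 := by
        have := pow_le_pow_left₀ (by positivity) hkey 2
        rwa [mul_pow (Real.sqrt _), Real.sq_sqrt (by positivity)] at this
      have h2 : (Real.pi * (1 + A) * Gr)^2 ≤ (A + A^2) * ((2 * k * (Real.pi * Gr)) * (Real.pi * T)) :=
        h1.trans (by gcongr)
      have h3 : 0 < Real.pi^2 * (1 + A) * Gr := by positivity
      by_contra h4
      push Not at h4
      have := mul_lt_mul_of_pos_left h4 h3
      nlinarith
  have hG2 : ℓ * B ≤ Gr := by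
    have e1 : ℓ * B = ∫ z, (Elev k Φ b).indicator (fun _ => ℓ) z ∂hypMu := by
      rw [integral_indicator_const _ (Elev_meas hΦ b), smul_eq_mul, mul_comm]
    rw [e1]
    apply integral_mono
    · exact (integrable_indicator_iff (Elev_meas hΦ b)).2 (integrableOn_const hfb.ne)
    · exact int_hyp hgrc hr hgr0
    · intro z
      simp only
      by_cases hz : z ∈ Elev k Φ b
      · rw [Set.indicator_of_mem hz]
        have h1 : ‖z‖ < 1 := by simpa using hz.1
        simp only [gr, h1, if_true]
        exact hmono (le_of_lt hz.2)
      · rw [Set.indicator_of_notMem hz]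
        by_cases h1 : ‖z‖ < 1
        · simp [gr, h1, hhnn]
        · simp [gr, h1]
  have hT2 : T ≤ A - B := by
    have i1 : Integrable ((Elev k Φ a).indicator (fun _ => (1:ℝ))) hypMu :=
      (integrable_indicator_iff (Elev_meas hΦ a)).2 (integrableOn_const hfa.ne)
    have i2 : Integrable ((Elev k Φ b).indicator (fun _ => (1:ℝ))) hypMu :=
      (integrable_indicator_iff (Elev_meas hΦ b)).2 (integrableOn_const hfb.ne)
    have e1 : A - B = ∫ z, ((Elev k Φ a).indicator (fun _ => (1:ℝ)) z -
        (Elev k Φ b).indicator (fun _ => (1:ℝ)) z) ∂hypMu := by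
      rw [integral_sub i1 i2, integral_indicator_const _ (Elev_meas hΦ a),
        integral_indicator_const _ (Elev_meas hΦ b)]
      simp [hA, hB]
    rw [e1]
    apply integral_mono (int_hyp hθc hr hθ0) (i1.sub i2)
    intro z
    rw [Pi.sub_apply]
    by_cases hz : z ∈ Elev k Φ b
    · rw [Set.indicator_of_mem hz, Set.indicator_of_mem (hEbsub hz)]
      have h1 : ‖z‖ < 1 := by simpa using hz.1
      simp only [θ, h1, if_true]
      rw [hds _ (fun h => absurd h.2 (not_lt.2 (le_of_lt hz.2)))]
      simp
    · rw [Set.indicator_of_notMem hz]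
      by_cases hza : z ∈ Elev k Φ a
      · rw [Set.indicator_of_mem hza]
        have h1 : ‖z‖ < 1 := by simpa using hza.1
        simp only [θ, h1, if_true]
        linarith [hd1 (S z)]
      · rw [Set.indicator_of_notMem hza]
        by_cases h1 : ‖z‖ < 1
        · simp only [θ, h1, if_true]
          rw [hds]
          · simp
          · intro h2
            exact hza ⟨by simpa using h1, h2.1⟩
        · simp [θ, h1]
  calc (1 + A) * (ℓ * B) ≤ (1 + A) * Gr := by gcongr
    _ ≤ 2 * k * A * T := hmain
    _ ≤ 2 * k * A * (A - B) := by gcongr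

lemma level_aux {k : ℝ} (hk : 0 < k) {Φ : ℂ → ℂ} (hΦ : DifferentiableOn ℂ Φ (ball 0 1))
    (hdec : ∀ t : ℝ, 0 < t → ∃ r < 1, ∀ z : ℂ, ‖z‖ < 1 → t ≤ Sf k Φ z → ‖z‖ ≤ r)
    {a b a' b' : ℝ} (ha : 0 < a) (haa : a < a') (hab' : a' < b') (hbb : b' < b) :
    (1 + hypMu.real (Elev k Φ a)) * ((Real.log b' - Real.log a') * hypMu.real (Elev k Φ b))
      ≤ 2 * k * hypMu.real (Elev k Φ a) *
        (hypMu.real (Elev k Φ a) - hypMu.real (Elev k Φ b)) := by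
  have hab : a < b := by linarith
  obtain ⟨η, h0, h1, h01⟩ := exists_continuous_zero_one_of_isClosed
    (s := (Set.Ioo a b)ᶜ) (t := Set.Icc a' b') isOpen_Ioo.isClosed_compl isClosed_Icc (by
      rw [Set.disjoint_left]
      intro x hx hx2
      exact hx ⟨by linarith [hx2.1], by linarith [hx2.2]⟩)
  let d : ℝ → ℝ := fun x => η x / max x a
  have hmax : ∀ x, 0 < max x a := fun x => lt_of_lt_of_le ha (le_max_right _ _)
  have hd : Continuous d :=
    η.continuous.div (continuous_id.max continuous_const) (fun x => (hmax x).ne')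
  have hd0 : ∀ x, 0 ≤ d x := fun x => div_nonneg (h01 x).1 (hmax x).le
  have hds : ∀ x, x ∉ Set.Ioo a b → d x = 0 := by
    intro x hx
    have : η x = 0 := h0 hx
    simp [d, this]
  have hd1 : ∀ x, x * d x ≤ 1 := by
    intro x
    by_cases hx : x ∈ Set.Ioo a b
    · simp only [d]
      rw [max_eq_left hx.1.le]
      have : 0 < x := ha.trans hx.1
      rw [mul_div_cancel₀ _ this.ne']
      exact (h01 x).2
    · rw [hds x hx]; simp
  refine le_trans ?_ (core hk hΦ hdec ha hab hd hd0 hds hd1)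
  have hA : 0 ≤ hypMu.real (Elev k Φ a) := measureReal_nonneg
  have hB : 0 ≤ hypMu.real (Elev k Φ b) := measureReal_nonneg
  have : Real.log b' - Real.log a' ≤ ∫ x in a..b, d x := by
    have e1 : Real.log b' - Real.log a' = ∫ x in a'..b', x⁻¹ := by
      rw [integral_inv_of_pos (by linarith) (by linarith), Real.log_div (by linarith) (by linarith)]
    have e2 : ∫ x in a'..b', x⁻¹ = ∫ x in a'..b', d x := by
      apply intervalIntegral.integral_congr
      intro x hx
      rw [Set.uIcc_of_le hab'.le] at hx
      have : η x = 1 := h1 hx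
      simp only [d]
      rw [this, max_eq_left (by linarith [hx.1]), one_div]
    rw [e1, e2]
    apply intervalIntegral.integral_mono_interval haa.le hab'.le hbb.le
    · exact Filter.Eventually.of_forall hd0
    · exact hd.intervalIntegrable _ _
  gcongr

lemma level {k : ℝ} (hk : 0 < k) {Φ : ℂ → ℂ} (hΦ : DifferentiableOn ℂ Φ (ball 0 1))
    (hdec : ∀ t : ℝ, 0 < t → ∃ r < 1, ∀ z : ℂ, ‖z‖ < 1 → t ≤ Sf k Φ z → ‖z‖ ≤ r)
    {a b : ℝ} (ha : 0 < a) (hab : a < b) :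
    (1 + hypMu.real (Elev k Φ a)) * ((Real.log b - Real.log a) * hypMu.real (Elev k Φ b))
      ≤ 2 * k * hypMu.real (Elev k Φ a) *
        (hypMu.real (Elev k Φ a) - hypMu.real (Elev k Φ b)) := by
  have hc : ContinuousAt (fun δ : ℝ => (1 + hypMu.real (Elev k Φ a)) *
      ((Real.log (b - δ) - Real.log (a + δ)) * hypMu.real (Elev k Φ b))) 0 := by
    have h1 : ContinuousAt (fun δ : ℝ => Real.log (b - δ)) 0 :=
      ContinuousAt.log (by fun_prop) (by simp; linarith)
    have h2 : ContinuousAt (fun δ : ℝ => Real.log (a + δ)) 0 :=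
      ContinuousAt.log (by fun_prop) (by simp; linarith)
    exact continuousAt_const.mul ((h1.sub h2).mul continuousAt_const)
  have ht := hc.tendsto.mono_left (nhdsWithin_le_nhds (s := Set.Ioi (0:ℝ)))
  simp only [sub_zero, add_zero] at ht
  refine le_of_tendsto ht ?_
  have hev : Set.Ioo (0:ℝ) ((b - a)/2) ∈ nhdsWithin (0:ℝ) (Set.Ioi 0) :=
    Ioo_mem_nhdsGT (by linarith)
  filter_upwards [hev] with δ hδ
  exact level_aux hk hΦ hdec ha (by linarith [hδ.1]) (by linarith [hδ.2]) (by linarith [hδ.1])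

lemma quad_anti {g : ℝ → ℝ} {α β C : ℝ} (hαβ : α ≤ β)
    (h : ∀ x y, α ≤ x → x ≤ y → y ≤ β → g y - g x ≤ C * (y - x) ^ 2) : g β ≤ g α := by
  have key : ∀ N : ℕ, g β - g α ≤ C * (β - α) ^ 2 * (1 / ((N : ℝ) + 1)) := by
    intro N
    have hN : (0 : ℝ) < (N : ℝ) + 1 := by positivity
    set d := (β - α) / ((N : ℝ) + 1) with hd
    have hd0 : 0 ≤ d := div_nonneg (by linarith) hN.le
    have hdN : ((N : ℝ) + 1) * d = β - α := by rw [hd]; field_simp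
    have hs := Finset.sum_range_sub (fun i : ℕ => g (α + i * d)) (N + 1)
    have e1 : α + ((N + 1 : ℕ) : ℝ) * d = β := by push_cast; rw [hdN]; ring
    simp only [e1] at hs
    have e2 : α + ((0 : ℕ) : ℝ) * d = α := by simp
    rw [e2] at hs
    rw [← hs]
    calc _ ≤ ∑ i ∈ Finset.range (N + 1), C * d ^ 2 := by
          apply Finset.sum_le_sum
          intro i hi
          have hi' : ((i : ℝ) + 1) ≤ (N : ℝ) + 1 := by
            have := Finset.mem_range.1 hi
            exact_mod_cast this
          have := h (α + i * d) (α + ((i + 1 : ℕ) : ℝ) * d) (by nlinarith [(Nat.cast_nonneg i : (0:ℝ) ≤ i)])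
            (by push_cast; nlinarith) (by push_cast; nlinarith)
          refine this.trans (le_of_eq ?_)
          push_cast; ring
      _ = C * (β - α) ^ 2 * (1 / ((N : ℝ) + 1)) := by
          rw [Finset.sum_const, Finset.card_range, nsmul_eq_mul, hd]
          push_cast
          field_simp
  have hlim : Filter.Tendsto (fun N : ℕ => C * (β - α) ^ 2 * (1 / ((N : ℝ) + 1))) Filter.atTop (nhds (C * (β - α) ^ 2 * 0)) :=
    tendsto_one_div_add_atTop_nhds_zero_nat.const_mul _
  have := ge_of_tendsto' hlim key
  linarith

lemma step_alg {A A' m δ : ℝ} (hm : 0 < m) (hmA : m ≤ A') (hA : A' ≤ A) (hδ : 0 ≤ δ)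
    (h : (1 + A) * (δ * A') ≤ A * (A - A')) :
    (1 + δ) * (1 + A') - (1 + 1 / m) * δ ^ 2 ≤ 1 + A := by
  have hA' : 0 < A' := hm.trans_le hmA
  have hA0 : 0 < A := hA'.trans_le hA
  have hC : 0 ≤ 1 / m := by positivity
  by_cases hc : δ * (A' + 1) ≤ A - A'
  · nlinarith [mul_nonneg (add_nonneg zero_le_one hC) (sq_nonneg δ)]
  push Not at hc
  have h1 : 1 ≤ (1 / m) * A' := by rw [one_div, inv_mul_eq_div, le_div_iff₀ hm]; linarith
  -- multiply by A
  have : A * ((1 + δ) * (1 + A') - (1 + 1 / m) * δ ^ 2) ≤ A * (1 + A) := by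
    have h2 : δ * (A - A') ≤ δ * (δ * (A' + 1)) := mul_le_mul_of_nonneg_left hc.le hδ
    have h3 : A' + 1 ≤ A * (1 + 1 / m) := by nlinarith
    have h4 : δ * (δ * (A' + 1)) ≤ δ * (δ * (A * (1 + 1 / m))) := by gcongr
    nlinarith
  exact le_of_mul_le_mul_left this hA0

lemma Elev_finite {k : ℝ} {Φ : ℂ → ℂ}
    (hdec : ∀ t, 0 < t → ∃ r < 1, ∀ z : ℂ, ‖z‖ < 1 → t ≤ Sf k Φ z → ‖z‖ ≤ r) {a : ℝ} (ha : 0 < a) :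
    hypMu (Elev k Φ a) < ⊤ := by
  obtain ⟨r, hr, h⟩ := hdec a ha
  apply hypMu_compact hr
  rintro z ⟨hz, hz2⟩
  rw [mem_closedBall_zero_iff]
  exact h z (by simpa using hz) (le_of_lt hz2)

lemma Elev_anti {k : ℝ} {Φ : ℂ → ℂ} {a b : ℝ} (hab : a ≤ b) : Elev k Φ b ⊆ Elev k Φ a := by
  rintro z ⟨hz, hz2⟩
  exact ⟨hz, lt_of_le_of_lt hab hz2⟩

lemma mono_u {k : ℝ} (hk : 0 < k) {Φ : ℂ → ℂ} (hΦ : DifferentiableOn ℂ Φ (ball (0 : ℂ) 1))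
    (hdec : ∀ t, 0 < t → ∃ r < 1, ∀ z : ℂ, ‖z‖ < 1 → t ≤ Sf k Φ z → ‖z‖ ≤ r)
    {α β : ℝ} (hα : 0 < α) (hαβ : α ≤ β) (hpos : 0 < hypMu.real (Elev k Φ (β ^ (2 * k)))) :
    β * (1 + hypMu.real (Elev k Φ (β ^ (2 * k)))) ≤ α * (1 + hypMu.real (Elev k Φ (α ^ (2 * k)))) := by
  set A : ℝ → ℝ := fun u => hypMu.real (Elev k Φ (u ^ (2 * k))) with hAdef
  set m := A β with hm
  have hpos' : 0 < m := hpos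
  have hanti : ∀ x y, 0 < x → x ≤ y → A y ≤ A x := by
    intro x y hx hxy
    refine measureReal_mono (Elev_anti (Real.rpow_le_rpow hx.le hxy (by positivity))) ?_
    exact (Elev_finite hdec (Real.rpow_pos_of_pos hx _)).ne
  have := @quad_anti (fun u => u * (1 + A u)) α β (α⁻¹ * (1 + A α + (1 + 1 / m))) hαβ ?_
  · exact this
  intro x y hx hxy hy
  have hx0 : 0 < x := hα.trans_le hx
  have hy0 : 0 < y := hx0.trans_le hxy
  rcases hxy.eq_or_lt with rfl | hlt
  · simp
  set δ := 1 - x / y with hδ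
  have hδ0 : 0 ≤ δ := by rw [hδ, sub_nonneg, div_le_one hy0]; exact hxy
  have hδ1 : 0 ≤ 1 - δ := by rw [hδ]; simp; positivity
  have hyδ : y * δ = y - x := by rw [hδ]; field_simp
  have hmy : m ≤ A y := hanti y β hy0 hy
  have hyx : A y ≤ A x := hanti x y hx0 hxy
  have hAy0 : 0 < A y := hpos'.trans_le hmy
  have hl := level (a := x ^ (2 * k)) (b := y ^ (2 * k)) hk hΦ hdec (Real.rpow_pos_of_pos hx0 _)
    (Real.rpow_lt_rpow hx0.le hlt (by positivity))
  rw [Real.log_rpow hx0, Real.log_rpow hy0] at hl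
  change (1 + A x) * ((2 * k * Real.log y - 2 * k * Real.log x) * A y) ≤ 2 * k * A x * (A x - A y) at hl
  have hlog : δ ≤ Real.log y - Real.log x := by
    have := Real.one_sub_inv_le_log_of_pos (div_pos hy0 hx0)
    rw [Real.log_div hy0.ne' hx0.ne', inv_div] at this
    exact this
  have h1 : (1 + A x) * (δ * A y) ≤ A x * (A x - A y) := by
    have h2 : (1 + A x) * (δ * A y) ≤ (1 + A x) * ((Real.log y - Real.log x) * A y) := by
      have : 0 ≤ 1 + A x := by linarith
      gcongr
    refine h2.trans ?_
    have h2k : 0 < 2 * k := by positivity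
    refine le_of_mul_le_mul_left ?_ h2k
    linarith
  have h3 := step_alg hpos' hmy hyx hδ0 h1
  have hxe : x = y * (1 - δ) := by linarith
  have hxα : A x ≤ A α := hanti α x hα hx
  show y * (1 + A y) - x * (1 + A x) ≤ _
  have h4 : (1 - δ) * ((1 + δ) * (1 + A y) - (1 + 1 / m) * δ ^ 2) ≤ (1 - δ) * (1 + A x) :=
    mul_le_mul_of_nonneg_left h3 hδ1
  have hCm : 0 ≤ 1 + 1 / m := by positivity
  have h5 : (1 + A y) - (1 - δ) * (1 + A x) ≤ δ ^ 2 * (1 + A α + (1 + 1 / m)) := by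
    have : (1 - δ) * ((1 + 1 / m) * δ ^ 2) ≤ (1 + 1 / m) * δ ^ 2 := by
      have : 0 ≤ (1 + 1 / m) * δ ^ 2 := by positivity
      nlinarith
    have h6 : δ ^ 2 * A y ≤ δ ^ 2 * A α := by
      apply mul_le_mul_of_nonneg_left (hyx.trans hxα) (sq_nonneg _)
    nlinarith
  calc y * (1 + A y) - x * (1 + A x) = y * ((1 + A y) - (1 - δ) * (1 + A x)) := by
        rw [hxe]; ring
    _ ≤ y * (δ ^ 2 * (1 + A α + (1 + 1 / m))) := by gcongr
    _ = y⁻¹ * (1 + A α + (1 + 1 / m)) * (y * δ) ^ 2 := by field_simp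
    _ ≤ α⁻¹ * (1 + A α + (1 + 1 / m)) * (y * δ) ^ 2 := by
        have : α ≤ y := hx.trans hxy
        have : 0 ≤ 1 + A α + (1 + 1 / m) := by linarith
        gcongr
    _ = _ := by rw [hyδ]

noncomputable def aZero (T β t : ℝ) : ENNReal := ENNReal.ofReal ((T / t) ^ β - 1)

lemma aZero_meas (T β : ℝ) : Measurable (aZero T β) := by
  unfold aZero
  exact (((measurable_const.div measurable_id).pow_const β).sub_const 1).ennreal_ofReal

lemma aZero_int {T β r : ℝ} (hT : 0 < T) (hβ : 0 < β) (hr : β < r) :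
    ENNReal.ofReal r * ∫⁻ t in Set.Ioi (0 : ℝ), aZero T β t * ENNReal.ofReal (t ^ (r - 1))
      = ENNReal.ofReal (T ^ r * β / (r - β)) := by
  have hr0 : 0 < r := hβ.trans hr
  have e1 : ∀ t ∈ Set.Ioi (0 : ℝ), aZero T β t * ENNReal.ofReal (t ^ (r - 1))
      = (Set.Ioc 0 T).indicator (fun t => ENNReal.ofReal (T ^ β * t ^ (r - 1 - β) - t ^ (r - 1))) t := by
    intro t ht
    have ht : 0 < t := ht
    unfold aZero
    by_cases h : t ≤ T
    · rw [Set.indicator_of_mem (show t ∈ Set.Ioc 0 T from ⟨ht, h⟩), ← ENNReal.ofReal_mul']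
      · congr 1
        rw [Real.div_rpow hT.le ht.le, Real.rpow_sub ht (r - 1) β]
        have := Real.rpow_pos_of_pos ht β
        field_simp
      · positivity
    · rw [Set.indicator_of_notMem (fun h' => h h'.2)]
      push Not at h
      have : (T / t) ^ β ≤ 1 := Real.rpow_le_one (by positivity) ((div_le_one ht).2 h.le) hβ.le
      rw [ENNReal.ofReal_of_nonpos (by linarith), zero_mul]
  rw [setLIntegral_congr_fun measurableSet_Ioi e1, lintegral_indicator measurableSet_Ioc,
    Measure.restrict_restrict measurableSet_Ioc,
    Set.inter_eq_left.2 (fun x hx => hx.1)]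
  have i1 : IntervalIntegrable (fun t : ℝ => T ^ β * t ^ (r - 1 - β)) volume 0 T :=
    (intervalIntegral.intervalIntegrable_rpow' (by linarith)).const_mul _
  have i2 : IntervalIntegrable (fun t : ℝ => t ^ (r - 1)) volume 0 T :=
    intervalIntegral.intervalIntegrable_rpow' (by linarith)
  rw [← ofReal_integral_eq_lintegral_ofReal, ← intervalIntegral.integral_of_le hT.le,
    intervalIntegral.integral_sub i1 i2, intervalIntegral.integral_const_mul,
    integral_rpow (Or.inl (by linarith)), integral_rpow (Or.inl (by linarith)),
    ← ENNReal.ofReal_mul hr0.le]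
  · congr 1
    rw [show r - 1 - β + 1 = r - β by ring, show r - 1 + 1 = r by ring,
      Real.zero_rpow (by linarith), Real.zero_rpow (by linarith), Real.rpow_sub hT]
    have := Real.rpow_pos_of_pos hT β
    have : r - β ≠ 0 := by linarith
    field_simp
    ring
  · exact ((i1.sub i2).1)
  · filter_upwards [ae_restrict_mem measurableSet_Ioc] with t ht
    have ht0 : 0 < t := ht.1
    show 0 ≤ T ^ β * t ^ (r - 1 - β) - t ^ (r - 1)
    rw [Real.rpow_sub ht0 (r - 1) β, sub_nonneg]
    have h1 : t ^ β ≤ T ^ β := Real.rpow_le_rpow ht0.le ht.2 hβ.le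
    have h2 := Real.rpow_pos_of_pos ht0 β
    have h3 := Real.rpow_pos_of_pos ht0 (r - 1)
    rw [← mul_div_assoc, le_div_iff₀ h2]
    nlinarith

lemma compare_aux {μ : Measure ℂ} {g : ℂ → ℝ} (hg0 : ∀ z, 0 ≤ g z) (hgm : AEMeasurable g μ)
    {β q T : ℝ} (hβ : 0 < β) (hq : β < q) (hT : 0 < T)
    (hfin : ∀ t, 0 < t → μ {z | t < g z} ≠ ⊤)
    (hmono : ∀ t1 t2, 0 < t1 → t1 ≤ t2 → 0 < μ.real {z | t2 < g z} →
      t2 ^ β * (1 + μ.real {z | t2 < g z}) ≤ t1 ^ β * (1 + μ.real {z | t1 < g z}))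
    (hTq : ∫⁻ z, ENNReal.ofReal (g z ^ q) ∂μ = ENNReal.ofReal (T ^ q * β / (q - β))) :
    ∫⁻ z, ENNReal.ofReal (g z ^ (q + β)) ∂μ ≤ ENNReal.ofReal (T ^ (q + β) * β / q) := by
  have hq0 : 0 < q := hβ.trans hq
  set a : ℝ → ℝ := fun t => μ.real {z | t < g z} with ha
  have ha0 : ∀ t, 0 ≤ a t := fun t => measureReal_nonneg
  have haE : ∀ t, 0 < t → μ {z | t < g z} = ENNReal.ofReal (a t) := by
    intro t ht
    rw [ha]; exact (ofReal_measureReal (hfin t ht)).symm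
  have hanti : ∀ x y, 0 < x → x ≤ y → a y ≤ a x := by
    intro x y hx hxy
    exact measureReal_mono (fun z hz => lt_of_le_of_lt hxy hz) (hfin x hx)
  set S : Set ℝ := {t | 0 < t ∧ 0 < a t ∧ T ^ β ≤ t ^ β * (1 + a t)} with hS
  have hbdd : BddAbove S := by
    refine ⟨max 1 ((1 + a 1) ^ (1 / β)), ?_⟩
    rintro t ⟨ht0, hta, -⟩
    rcases le_or_gt t 1 with h | h
    · exact le_max_of_le_left h
    · apply le_max_of_le_right
      have h1 := hmono 1 t one_pos h.le hta
      rw [Real.one_rpow, one_mul] at h1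
      have h2 : 0 ≤ t ^ β := by positivity
      have h3 : t ^ β ≤ 1 + a 1 := by
        refine le_trans ?_ h1
        have : 0 < μ.real {z | t < g z} := hta
        nlinarith
      rw [one_div, Real.le_rpow_inv_iff_of_pos ht0.le (by linarith [ha0 1]) hβ]
      exact h3
  obtain ⟨c, hc0, hlow, hhigh⟩ : ∃ c : ℝ, 0 ≤ c ∧ (∀ t, 0 < t → t < c → (T / t) ^ β - 1 ≤ a t) ∧
      (∀ t, 0 < t → c < t → a t ≤ max ((T / t) ^ β - 1) 0) := by
    have hhi : ∀ t, 0 < t → t ∉ S → a t ≤ max ((T / t) ^ β - 1) 0 := by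
      intro t ht hn
      rcases (ha0 t).eq_or_lt with h | h
      · rw [← h]; exact le_max_right _ _
      · apply le_max_of_le_left
        have : ¬ (T ^ β ≤ t ^ β * (1 + a t)) := fun h' => hn ⟨ht, h, h'⟩
        push Not at this
        have h2 := Real.rpow_pos_of_pos ht β
        rw [Real.div_rpow hT.le ht.le, le_sub_iff_add_le, le_div_iff₀ h2]
        linarith
    rcases S.eq_empty_or_nonempty with hE | hne
    · refine ⟨0, le_rfl, fun t h1 h2 => absurd h1 (not_lt.2 h2.le), fun t h1 _ => hhi t h1 ?_⟩
      rw [hE]; exact Set.notMem_empty _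
    · refine ⟨sSup S, ?_, ?_, ?_⟩
      · obtain ⟨t, ht⟩ := hne
        exact ht.1.le.trans (le_csSup hbdd ht)
      · intro t ht htc
        obtain ⟨t2, ht2, hlt⟩ := exists_lt_of_lt_csSup hne htc
        have h1 := hmono t t2 ht hlt.le ht2.2.1
        have h2 := Real.rpow_pos_of_pos ht β
        have h3 : T ^ β ≤ t ^ β * (1 + a t) := ht2.2.2.trans h1
        rw [Real.div_rpow hT.le ht.le, sub_le_iff_le_add, div_le_iff₀ h2]
        linarith
      · intro t ht hct
        exact hhi t ht (notMem_of_csSup_lt hct hbdd)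
  -- layer cake
  have hlay : ∀ r, 0 < r → ∫⁻ z, ENNReal.ofReal (g z ^ r) ∂μ =
      ENNReal.ofReal r * ∫⁻ t in Set.Ioi (0 : ℝ), μ {z | t < g z} * ENNReal.ofReal (t ^ (r - 1)) := by
    intro r hr
    exact lintegral_rpow_eq_lintegral_meas_lt_mul μ (Filter.Eventually.of_forall hg0) hgm hr
  set Fa : ℝ → ENNReal := fun r => ∫⁻ t in Set.Ioi (0 : ℝ), μ {z | t < g z} * ENNReal.ofReal (t ^ (r - 1)) with hFa
  set F0 : ℝ → ENNReal := fun r => ∫⁻ t in Set.Ioi (0 : ℝ), aZero T β t * ENNReal.ofReal (t ^ (r - 1)) with hF0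
  have h0 : ∀ r, β < r → ENNReal.ofReal r * F0 r = ENNReal.ofReal (T ^ r * β / (r - β)) :=
    fun r hr => aZero_int hT hβ hr
  have hqne : ENNReal.ofReal q ≠ 0 := by simpa using hq0
  have hFq : Fa q = F0 q := by
    have : ENNReal.ofReal q * Fa q = ENNReal.ofReal q * F0 q := by
      rw [h0 q hq, ← hTq, hlay q hq0]
    exact (ENNReal.mul_right_inj hqne ENNReal.ofReal_ne_top).1 this
  have hF0fin : F0 q ≠ ⊤ := by
    intro h
    have := h0 q hq
    rw [h, ENNReal.mul_top hqne] at this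
    exact ENNReal.ofReal_ne_top this.symm
  have hpt : ∀ t ∈ Set.Ioi (0 : ℝ), μ {z | t < g z} * ENNReal.ofReal (t ^ (q + β - 1)) +
      ENNReal.ofReal (c ^ β) * (aZero T β t * ENNReal.ofReal (t ^ (q - 1))) ≤
      aZero T β t * ENNReal.ofReal (t ^ (q + β - 1)) +
      ENNReal.ofReal (c ^ β) * (μ {z | t < g z} * ENNReal.ofReal (t ^ (q - 1))) := by
    intro t ht
    have ht : 0 < t := ht
    have hz : aZero T β t = ENNReal.ofReal (max ((T / t) ^ β - 1) 0) := by
      unfold aZero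
      rcases le_total ((T / t) ^ β - 1) 0 with h | h
      · rw [max_eq_right h, ENNReal.ofReal_of_nonpos h, ENNReal.ofReal_zero]
      · rw [max_eq_left h]
    rw [haE t ht, hz]
    set m0 := max ((T / t) ^ β - 1) 0 with hm0
    have hm00 : 0 ≤ m0 := le_max_right _ _
    have hat := ha0 t
    have hcβ : 0 ≤ c ^ β := Real.rpow_nonneg hc0 _
    have htq : 0 ≤ t ^ (q - 1) := by positivity
    have htp : 0 ≤ t ^ (q + β - 1) := by positivity
    rw [← ENNReal.ofReal_mul hat, ← ENNReal.ofReal_mul hm00, ← ENNReal.ofReal_mul hcβ,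
      ← ENNReal.ofReal_mul hm00, ← ENNReal.ofReal_mul hat, ← ENNReal.ofReal_mul hcβ,
      ← ENNReal.ofReal_add (by positivity) (by positivity),
      ← ENNReal.ofReal_add (by positivity) (by positivity)]
    apply ENNReal.ofReal_le_ofReal
    have hsplit : t ^ (q + β - 1) = t ^ β * t ^ (q - 1) := by
      rw [← Real.rpow_add ht]; congr 1; ring
    rw [hsplit]
    have key : (t ^ β - c ^ β) * (a t - m0) ≤ 0 := by
      rcases lt_trichotomy t c with h | h | h
      · have h1 : t ^ β ≤ c ^ β := Real.rpow_le_rpow ht.le h.le hβ.le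
        have h2 : m0 ≤ a t := max_le (hlow t ht h) hat
        nlinarith
      · rw [h]; simp
      · have h1 : c ^ β ≤ t ^ β := Real.rpow_le_rpow hc0 h.le hβ.le
        have h2 := hhigh t ht h
        nlinarith
    nlinarith
  have hint := setLIntegral_mono' (μ := volume) measurableSet_Ioi hpt
  have mA : ∀ r : ℝ, Measurable (fun t : ℝ => aZero T β t * ENNReal.ofReal (t ^ (r - 1))) := fun r =>
    (aZero_meas T β).mul ((measurable_id.pow_const _).ennreal_ofReal)
  rw [lintegral_add_right _ ((mA q).const_mul _), lintegral_add_left (mA (q + β)),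
    lintegral_const_mul' _ _ ENNReal.ofReal_ne_top, lintegral_const_mul' _ _ ENNReal.ofReal_ne_top] at hint
  change Fa (q + β) + ENNReal.ofReal (c ^ β) * F0 q ≤ F0 (q + β) + ENNReal.ofReal (c ^ β) * Fa q at hint
  rw [hFq] at hint
  have hfinal := ENNReal.le_of_add_le_add_right (ENNReal.mul_ne_top ENNReal.ofReal_ne_top hF0fin) hint
  rw [hlay (q + β) (by linarith)]
  calc _ ≤ ENNReal.ofReal (q + β) * F0 (q + β) := mul_le_mul_right hfinal _
    _ = _ := by rw [h0 (q + β) (by linarith)]; simp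

lemma hypMu_ae_ball : ∀ᵐ z ∂hypMu, z ∈ ball (0 : ℂ) 1 :=
  (withDensity_absolutelyContinuous _ _).ae_le (ae_restrict_mem measurableSet_ball)

lemma norm_sq_eq_Sf {k : ℝ} {Φ f : ℂ → ℂ}
    (hf : ∀ ζ, f ζ = (((1 - ‖ζ‖ ^ 2) ^ k : ℝ) : ℂ) * Φ ζ) {z : ℂ} (hz : ‖z‖ < 1) :
    ‖f z‖ ^ 2 = Sf k Φ z := by
  have h := one_sub_pos hz
  unfold Sf
  rw [hf, norm_mul, Complex.norm_real, Real.norm_of_nonneg (Real.rpow_nonneg h.le _), mul_pow,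
    Complex.normSq_eq_norm_sq, ← Real.rpow_natCast ((1 - ‖z‖ ^ 2) ^ k) 2, ← Real.rpow_mul h.le]
  congr 2
  push_cast; ring

lemma meas_level_eq {k : ℝ} {Φ f : ℂ → ℂ}
    (hf : ∀ ζ, f ζ = (((1 - ‖ζ‖ ^ 2) ^ k : ℝ) : ℂ) * Φ ζ) {t : ℝ} (ht : 0 < t) :
    hypMu {z | t < ‖f z‖} = hypMu (Elev k Φ (t ^ 2)) := by
  apply measure_congr
  filter_upwards [hypMu_ae_ball] with z hz
  have hz1 : ‖z‖ < 1 := by simpa using hz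
  apply propext
  show t < ‖f z‖ ↔ z ∈ Elev k Φ (t ^ 2)
  have : z ∈ Elev k Φ (t ^ 2) ↔ t ^ 2 < Sf k Φ z := ⟨fun h => h.2, fun h => ⟨hz, h⟩⟩
  rw [this, ← norm_sq_eq_Sf hf hz1]
  exact (sq_lt_sq₀ ht.le (norm_nonneg _)).symm

lemma hyp_estimate {k q : ℝ} (hk : 0 < k) (hkq : 1 < k * q)
    {Φ f : ℂ → ℂ} (hΦ : DifferentiableOn ℂ Φ (ball (0 : ℂ) 1))
    (hf : ∀ ζ, f ζ = (((1 - ‖ζ‖ ^ 2) ^ k : ℝ) : ℂ) * Φ ζ)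
    (hL2 : Integrable (fun ζ => ‖f ζ‖ ^ 2) hypMu) {T : ℝ} (hT : 0 < T)
    (hTq : ∫⁻ z, ENNReal.ofReal (‖f z‖ ^ q) ∂hypMu = ENNReal.ofReal (T ^ q / (k * q - 1))) :
    ∫⁻ z, ENNReal.ofReal (‖f z‖ ^ (q + 1 / k)) ∂hypMu ≤ ENNReal.ofReal (T ^ (q + 1 / k) / (k * q)) := by
  have hq0 : 0 < q := by
    by_contra h
    push Not at h
    nlinarith
  have hdec : ∀ t, 0 < t → ∃ r < 1, ∀ z : ℂ, ‖z‖ < 1 → t ≤ Sf k Φ z → ‖z‖ ≤ r := by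
    intro t ht
    obtain ⟨r, hr, h⟩ := decay hk hΦ hf hL2 (Real.sqrt_pos.2 ht)
    refine ⟨r, hr, fun z hz htz => h z hz ?_⟩
    rw [← norm_sq_eq_Sf hf hz] at htz
    exact Real.sqrt_le_iff.2 ⟨norm_nonneg _, htz⟩
  have hgm : AEMeasurable (fun z => ‖f z‖) hypMu := by
    have := hL2.aestronglyMeasurable.aemeasurable
    have h2 := this.sqrt
    refine h2.congr (Filter.Eventually.of_forall fun z => ?_)
    exact Real.sqrt_sq (norm_nonneg _)
  have hβ : 0 < 1 / k := by positivity
  have hpw : ∀ t : ℝ, 0 < t → (t ^ (1 / k)) ^ (2 * k) = t ^ 2 := by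
    intro t ht
    rw [← Real.rpow_mul ht.le, ← Real.rpow_natCast]
    congr 1
    push_cast
    field_simp
  have hreal : ∀ t : ℝ, 0 < t → hypMu.real {z | t < ‖f z‖} = hypMu.real (Elev k Φ (t ^ 2)) := by
    intro t ht
    simp only [Measure.real, meas_level_eq hf ht]
  have hqk : 1 / k < q := by rw [div_lt_iff₀ hk]; linarith
  have := compare_aux (μ := hypMu) (g := fun z => ‖f z‖) (β := 1 / k) (q := q) (T := T)
    (fun z => norm_nonneg _) hgm hβ hqk hT ?_ ?_ ?_
  · refine this.trans (le_of_eq ?_)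
    congr 1
    field_simp
  · intro t ht
    rw [meas_level_eq hf ht]
    exact (Elev_finite hdec (by positivity)).ne
  · intro t1 t2 h1 h12 hpos
    have h2 : 0 < t2 := h1.trans_le h12
    have := mono_u hk hΦ hdec (α := t1 ^ (1 / k)) (β := t2 ^ (1 / k)) (by positivity)
      (Real.rpow_le_rpow h1.le h12 hβ.le)
    rw [hpw t1 h1, hpw t2 h2, ← hreal t1 h1, ← hreal t2 h2] at this
    exact this hpos
  · rw [hTq]
    congr 1
    have : q - 1 / k ≠ 0 := by linarith
    have h3 : k * q - 1 ≠ 0 := by linarith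
    have h4 : q - 1 / k = (k * q - 1) / k := by field_simp
    rw [h4]
    field_simp

lemma nuMeasure_eq {k : ℝ} (hk : 1 / 2 < k) :
    nuMeasure k = ENNReal.ofReal (2 * k - 1) • hypMu := by
  unfold nuMeasure hypMu
  rw [← withDensity_smul _ hypMu_dens_meas]
  congr 1
  funext ζ
  rw [Pi.smul_apply, smul_eq_mul, ← ENNReal.ofReal_mul (by linarith)]
  congr 1
  rw [div_eq_mul_inv]; ring

/-- Sharp norm estimate for SU(1,1) coherent state transforms (Corollary 3.3):
if `f(ζ) = (1−|ζ|²)^k Φ(ζ)` with `Φ` holomorphic on the disc and `f ∈ L²(ν_k)`,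
then for `q ≥ 2`, `kq > 2` and `p = q + 1/k`,
`∫ |f|^q dν_k ≥ ((2k−1)/(kq−1))·((kp−1)/(2k−1))^{q/p}·(∫ |f|^p dν_k)^{q/p}`.
(The integrals are interpreted in `[0,∞]`.) -/
theorem coherent_state_norm_estimate
    (k q p : ℝ) (hk : 1 / 2 < k) (hq : 2 ≤ q) (hkq : 2 < k * q)
    (hp : p = q + 1 / k)
    (Φ : ℂ → ℂ) (hΦ : DifferentiableOn ℂ Φ (ball (0 : ℂ) 1))
    (f : ℂ → ℂ) (hf : ∀ ζ, f ζ = (((1 - ‖ζ‖ ^ 2) ^ k : ℝ) : ℂ) * Φ ζ)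
    (hL2 : Integrable (fun ζ => ‖f ζ‖ ^ 2) (nuMeasure k)) :
    ENNReal.ofReal ((2 * k - 1) / (k * q - 1) * ((k * p - 1) / (2 * k - 1)) ^ (q / p))
        * (∫⁻ ζ, ENNReal.ofReal (‖f ζ‖ ^ p) ∂(nuMeasure k)) ^ (q / p)
      ≤ ∫⁻ ζ, ENNReal.ofReal (‖f ζ‖ ^ q) ∂(nuMeasure k) := by
  have hk0 : 0 < k := by linarith
  have h2k : 0 < 2 * k - 1 := by linarith
  have hν := nuMeasure_eq hk
  have hne : ENNReal.ofReal (2 * k - 1) ≠ 0 := by simpa using h2k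
  have hL2' : Integrable (fun ζ => ‖f ζ‖ ^ 2) hypMu := by
    rw [hν] at hL2
    exact (integrable_smul_measure hne ENNReal.ofReal_ne_top).1 hL2
  rw [hν, lintegral_smul_measure, lintegral_smul_measure, smul_eq_mul, smul_eq_mul]
  have hp0 : 0 < p := by rw [hp]; positivity
  have hq0 : 0 < q := by linarith
  have hqp : 0 < q / p := by positivity
  have hkp : k * p - 1 = k * q := by rw [hp]; field_simp; ring
  have hkq1 : 0 < k * q - 1 := by linarith
  have hkq0 : 0 < k * q := by linarith
  set Mq := ∫⁻ ζ, ENNReal.ofReal (‖f ζ‖ ^ q) ∂hypMu with hMq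
  by_cases htop : Mq = ⊤
  · rw [htop, ENNReal.mul_top hne]; exact le_top
  have hgm : AEMeasurable (fun z => ‖f z‖) hypMu := by
    have := hL2'.aestronglyMeasurable.aemeasurable
    have h2 := this.sqrt
    refine h2.congr (Filter.Eventually.of_forall fun z => ?_)
    exact Real.sqrt_sq (norm_nonneg _)
  by_cases hzero : Mq = 0
  · have h1 : ∫⁻ ζ, ENNReal.ofReal (‖f ζ‖ ^ p) ∂hypMu = 0 := by
      rw [hMq, lintegral_eq_zero_iff' (hgm.pow_const q).ennreal_ofReal] at hzero
      rw [lintegral_eq_zero_iff' (hgm.pow_const p).ennreal_ofReal]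
      filter_upwards [hzero] with z hz
      have hz' : ENNReal.ofReal (‖f z‖ ^ q) = 0 := hz
      rw [ENNReal.ofReal_eq_zero] at hz'
      have h3 : ‖f z‖ = 0 := by
        by_contra h
        have : 0 < ‖f z‖ := lt_of_le_of_ne (norm_nonneg _) (Ne.symm h)
        have := Real.rpow_pos_of_pos this q
        linarith
      show ENNReal.ofReal (‖f z‖ ^ p) = 0
      rw [h3, Real.zero_rpow hp0.ne', ENNReal.ofReal_zero]
    rw [h1, mul_zero, ENNReal.zero_rpow_of_pos hqp, mul_zero]
    exact zero_le
  have hM : 0 < Mq.toReal := ENNReal.toReal_pos hzero htop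
  set T := ((k * q - 1) * Mq.toReal) ^ (1 / q) with hT
  have hT0 : 0 < T := by positivity
  have hTq : T ^ q = (k * q - 1) * Mq.toReal := by
    rw [hT, ← Real.rpow_mul (by positivity), one_div, inv_mul_cancel₀ hq0.ne', Real.rpow_one]
  have hest := hyp_estimate (q := q) hk0 (by linarith) hΦ hf hL2' hT0 (by
    rw [← hMq, hTq, mul_div_cancel_left₀ _ hkq1.ne', ENNReal.ofReal_toReal htop])
  rw [← hp] at hest
  rw [hkp]
  calc _ ≤ ENNReal.ofReal ((2 * k - 1) / (k * q - 1) * (k * q / (2 * k - 1)) ^ (q / p)) *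
        (ENNReal.ofReal (2 * k - 1) * ENNReal.ofReal (T ^ p / (k * q))) ^ (q / p) := by
        gcongr
    _ = ENNReal.ofReal (2 * k - 1) * Mq := by
        rw [← ENNReal.ofReal_mul h2k.le, ENNReal.ofReal_rpow_of_nonneg (by positivity) hqp.le,
          ← ENNReal.ofReal_mul (by positivity)]
        conv_rhs => rw [← ENNReal.ofReal_toReal htop, ← ENNReal.ofReal_mul h2k.le]
        congr 1
        rw [mul_assoc, ← Real.mul_rpow (by positivity) (by positivity)]
        have e1 : k * q / (2 * k - 1) * ((2 * k - 1) * (T ^ p / (k * q))) = T ^ p := by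
          field_simp
          exact div_self (by linarith)
        rw [e1, ← Real.rpow_mul hT0.le, mul_div_cancel₀ _ hp0.ne', hTq]
        field_simp
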